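/- arXiv:1302.5860 — 2 statements merged into one kernel-verified Lean document; each statement's English description precedes it below -/
import Mathlib

section
/- Assume random codes are permitted. Suppose the compound medium ℬ is capable of communicating the mutually independent i.i.d. X_ij sources, from user i to user j for all 1 ≤ i,j ≤ N, to within distortion levels D_ij under additive distortion functions d_ij. Then for any rates R_ij with 0 < R_ij < R^P_{X_ij}(D_ij), reliable communication at rate R_ij from user i to user j, simultaneously for all pairs (i,j), is achievable over every m ∈ ℬ with random codes (maximal error probabilities vanishing uniformly over m ∈ ℬ). -/
/-!
The modems that carry the sources are reused as a channel for messages: the message of the pair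
`(i, j)` is sent by feeding the source modem with a random codeword, drawn i.i.d. from the source
law `X_ij`. Since the inputs of the source modem are then distributed exactly as the sources, the
codeword sent is within distortion `D_ij` of the reproduction at user `j` with high probability,
and every other codeword is independent of that reproduction. User `j` decodes to the only codeword
close to the reproduction (`random_code`).

For this to work, the distortion ball around each reproduction must have small probability. Choose
`R < R' < R'' < R^P(D)`. As long as possible, remove from the source space a ball whose remaining
part has probability more than `2 ^ (-n R')` (`greedy`). At most `2 ^ (n R')` balls are removed, and
on the set `U_n` of remaining source words, to which decoding is restricted, all balls have
probability at most `2 ^ (-n R')`. So the union bound over fewer than `2 ^ (n R)` false codewords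
vanishes, and it remains to see that the removed set has vanishing probability.

This is a strong converse (`covered_vanishes`). The removed set is covered by the `2 ^ (n R')`
centres. If its probability were at least `δ > 0` for infinitely many `n`, fix one such large `n`.
By bounded differences and Chebyshev's inequality, a long i.i.d. word is, off a small fraction of
its positions, a concatenation of removed blocks (`block_cover`), hence is reproduced within the
distortion budget by a concatenation of centres there. The exceptional positions are repaired with
the letterwise best reproduction; this changes a small fraction of positions and costs a factor
`2 ^ (m β)` in the number of codewords, with `β` arbitrarily small (`hamming_ball`). Repairing
stays within the budget `m D` because the mean of the best letterwise distortion is strictly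
below `D`, or that distortion equals `D` on the whole support (`mean_lt_or_const`): otherwise a sum
of i.i.d. letters would exceed its mean with probability bounded away from `0` (`Pr_pos_ge`), and no
modem could have vanishing excess probability. The result is a source code of rate `R''`, which
contradicts `R'' < R^P(D)`.
-/

open Finset Filter
open scoped ENNReal

noncomputable section

/-- `p` is a probability mass function on the finite type `α`. -/
def IsDist {α : Type} [Fintype α] (p : α → ℝ) : Prop :=
  (∀ a, 0 ≤ p a) ∧ ∑ a, p a = 1

/-- A block random encoder–decoder pair: a joint probability distribution on pairs of
deterministic maps (encoder `A → B`, decoder `C → E`). -/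
structure RandCode (A B C E : Type) [Fintype A] [DecidableEq A] [Fintype B]
    [Fintype C] [DecidableEq C] [Fintype E] where
  p : ((A → B) × (C → E)) → ℝ
  isDist : IsDist p

/-- Size of the message set `M^n_R = {1, …, 2^⌊nR⌋}`. -/
def nMsg (R : ℝ) (n : ℕ) : ℕ := 2 ^ ⌊(n : ℝ) * R⌋₊

/-- Probability of the block `x` under an i.i.d. source with single-letter pmf `pX`. -/
def iidP {𝒳 : Type} (pX : 𝒳 → ℝ) (n : ℕ) (x : Fin n → 𝒳) : ℝ := ∏ t, pX (x t)

/-- The additive `n`-letter extension `d^n` of a single-letter distortion function. -/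
def dPow {𝒳 𝒴 : Type} (d : 𝒳 → 𝒴 → ℝ) (n : ℕ) (x : Fin n → 𝒳) (y : Fin n → 𝒴) : ℝ :=
  ∑ t, d (x t) (y t)

/-- Probability of excess distortion for a random rate-`R` source code `τ` at block length
`n`, for the i.i.d. `pX` source and additive distortion `d`. -/
def srcExcess {𝒳 𝒴 : Type} [Fintype 𝒳] [DecidableEq 𝒳] [Fintype 𝒴]
    (pX : 𝒳 → ℝ) (d : 𝒳 → 𝒴 → ℝ) (D R : ℝ) (n : ℕ)
    (τ : RandCode (Fin n → 𝒳) (Fin (nMsg R n)) (Fin (nMsg R n)) (Fin n → 𝒴)) : ℝ :=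
  ∑ ef, τ.p ef * ∑ x, iidP pX n x *
    (if (n : ℝ) * D < dPow d n x (ef.2 (ef.1 x)) then 1 else 0)

/-- The operational rate-distortion function `R^P_X(D)` (infimum in `ℝ≥0∞`). -/
def RP {𝒳 𝒴 : Type} [Fintype 𝒳] [DecidableEq 𝒳] [Fintype 𝒴]
    (pX : 𝒳 → ℝ) (d : 𝒳 → 𝒴 → ℝ) (D : ℝ) : ℝ≥0∞ :=
  sInf {r : ℝ≥0∞ | ∃ R : ℝ, 0 < R ∧
    (∃ τ : ∀ n : ℕ, RandCode (Fin n → 𝒳) (Fin (nMsg R n)) (Fin (nMsg R n)) (Fin n → 𝒴),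
      Tendsto (fun n => srcExcess pX d D R n (τ n)) atTop (nhds 0)) ∧
    r = ENNReal.ofReal R}

/-- A medium with `N` users: for each block length `n` and each tuple of input blocks (one at
each user), a probability distribution on tuples of output blocks (one at each user). -/
structure Medium (N : ℕ) (ℐ 𝒪 : Fin N → Type)
    [∀ i, Fintype (ℐ i)] [∀ i, Fintype (𝒪 i)] where
  m : ∀ n : ℕ, (∀ i, Fin n → ℐ i) → (∀ i, Fin n → 𝒪 i) → ℝ
  isMed : ∀ n ι, IsDist (m n ι)

/-- A random modem scheme at block length `n` for communicating the sources: a joint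
probability distribution over tuples of deterministic modems, where user `i`'s transmit modem
maps its source blocks `(X_{ij})_j` to its medium input, and user `i`'s receive modem maps its
medium output to reproductions `(Y_{ji})_j` of the sources destined to it. -/
structure RandModem (N : ℕ) (ℐ 𝒪 : Fin N → Type) (𝒳 𝒴 : Fin N → Fin N → Type)
    [∀ i, Fintype (ℐ i)] [∀ i, Fintype (𝒪 i)] [∀ i, DecidableEq (𝒪 i)]
    [∀ i j, Fintype (𝒳 i j)] [∀ i j, DecidableEq (𝒳 i j)] [∀ i j, Fintype (𝒴 i j)]
    (n : ℕ) where
  p : ((∀ i, (∀ j, Fin n → 𝒳 i j) → Fin n → ℐ i) ×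
       (∀ i, (Fin n → 𝒪 i) → ∀ j, Fin n → 𝒴 j i)) → ℝ
  isDist : IsDist p

variable {N : ℕ} {ℐ 𝒪 : Fin N → Type} {𝒳 𝒴 : Fin N → Fin N → Type}
  [∀ i, Fintype (ℐ i)] [∀ i, Fintype (𝒪 i)] [∀ i, DecidableEq (𝒪 i)]
  [∀ i j, Fintype (𝒳 i j)] [∀ i j, DecidableEq (𝒳 i j)] [∀ i j, Fintype (𝒴 i j)]

/-- End-to-end probability that the normalized distortion of the pair `(i,j)` exceeds
`D i j`, when the mutually independent i.i.d. sources `pS i' j'` are passed through the random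
modem scheme `ρ` and the medium `med`, at block length `n`. -/
def muExcess (pS : ∀ i j, 𝒳 i j → ℝ) (dd : ∀ i j, 𝒳 i j → 𝒴 i j → ℝ)
    (D : Fin N → Fin N → ℝ) (n : ℕ)
    (ρ : RandModem N ℐ 𝒪 𝒳 𝒴 n) (med : Medium N ℐ 𝒪) (i j : Fin N) : ℝ :=
  ∑ ef, ρ.p ef *
    ∑ x : ∀ i' j', Fin n → 𝒳 i' j', (∏ i', ∏ j', ∏ t, pS i' j' (x i' j' t)) *
      ∑ o : ∀ i', Fin n → 𝒪 i', med.m n (fun i' => ef.1 i' (x i')) o *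
        (if (n : ℝ) * D i j < ∑ t, dd i j (x i j t) (ef.2 j (o j) i t) then 1 else 0)

/-- The compound medium `ℬ` is capable of communicating the mutually independent i.i.d.
sources `X_{ij}` from user `i` to user `j` to within distortions `D i j`: there are random
modems and `ω_{ij,n} → 0`, independent of `m ∈ ℬ`, bounding all excess-distortion
probabilities. -/
def MUCanCommunicate (ℬ : Set (Medium N ℐ 𝒪)) (pS : ∀ i j, 𝒳 i j → ℝ)
    (dd : ∀ i j, 𝒳 i j → 𝒴 i j → ℝ) (D : Fin N → Fin N → ℝ) : Prop :=
  ∃ ρ : ∀ n : ℕ, RandModem N ℐ 𝒪 𝒳 𝒴 n,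
    ∃ ω : Fin N → Fin N → ℕ → ℝ,
      (∀ i j, Tendsto (ω i j) atTop (nhds 0)) ∧
      ∀ n : ℕ, ∀ med ∈ ℬ, ∀ i j, muExcess pS dd D n (ρ n) med i j ≤ ω i j n

/-- A random message-modem scheme at block length `n` and rates `R i j`: user `i`'s transmit
modem maps its outgoing messages `(m_{ij})_j` to its medium input, and user `i`'s receive
modem maps its medium output to decoded incoming messages (possibly the error symbol `none`)
for each pair `(j,i)`. -/
structure RandMsgModem (N : ℕ) (ℐ 𝒪 : Fin N → Type)
    [∀ i, Fintype (ℐ i)] [∀ i, Fintype (𝒪 i)] [∀ i, DecidableEq (𝒪 i)]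
    (R : Fin N → Fin N → ℝ) (n : ℕ) where
  p : ((∀ i, (∀ j, Fin (nMsg (R i j) n)) → Fin n → ℐ i) ×
       (∀ i, (Fin n → 𝒪 i) → ∀ j, Option (Fin (nMsg (R j i) n)))) → ℝ
  isDist : IsDist p

/-- Probability that the message of the pair `(i,j)` is decoded incorrectly at user `j`, when
the message tuple `msg` is transmitted using the random message-modem scheme `σ` over the
medium `med` at block length `n`. -/
def muErr (R : Fin N → Fin N → ℝ) (n : ℕ) (σ : RandMsgModem N ℐ 𝒪 R n)
    (med : Medium N ℐ 𝒪) (msg : ∀ i j, Fin (nMsg (R i j) n)) (i j : Fin N) : ℝ :=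
  ∑ ef, σ.p ef * ∑ o, med.m n (fun i' => ef.1 i' (msg i')) o *
    (if ef.2 j (o j) i = some (msg i j) then 0 else 1)

/-- Rates `R i j` are simultaneously reliably achievable, for all pairs `(i,j)`, over the
compound medium `ℬ` with random codes: maximal error probabilities at most `δ n → 0`,
uniformly over `m ∈ ℬ`. -/
def MUReliablyAchievable (ℬ : Set (Medium N ℐ 𝒪)) (R : Fin N → Fin N → ℝ) : Prop :=
  ∃ σ : ∀ n : ℕ, RandMsgModem N ℐ 𝒪 R n,
    ∃ δ : ℕ → ℝ, Tendsto δ atTop (nhds 0) ∧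
      ∀ n : ℕ, ∀ med ∈ ℬ, ∀ msg : ∀ i j, Fin (nMsg (R i j) n), ∀ i j,
        muErr R n (σ n) med msg i j ≤ δ n

/-! ### Expectations under finite product distributions -/

/-- The expectation of `F` under the product of the (signed) weights `w a`. -/
def PE {ι : Type} [Fintype ι] [DecidableEq ι] {α : ι → Type} [∀ a, Fintype (α a)]
    (w : ∀ a, α a → ℝ) (F : (∀ a, α a) → ℝ) : ℝ :=
  ∑ x, (∏ a, w a (x a)) * F x

section PE

variable {ι : Type} [Fintype ι] [DecidableEq ι] {α : ι → Type} [∀ a, Fintype (α a)]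
  {w : ∀ a, α a → ℝ}

lemma isDist_prod (hw : ∀ a, IsDist (w a)) :
    IsDist (fun x : ∀ a, α a => ∏ a, w a (x a)) := by
  refine ⟨fun x => Finset.prod_nonneg fun a _ => (hw a).1 _, ?_⟩
  have h := Finset.prod_univ_sum (fun a => (Finset.univ : Finset (α a))) (fun a v => w a v)
  rw [Fintype.piFinset_univ] at h
  rw [← h]
  exact Finset.prod_eq_one fun a _ => (hw a).2

lemma PE_const (hw : ∀ a, IsDist (w a)) (c : ℝ) : PE w (fun _ => c) = c := by
  unfold PE
  rw [← Finset.sum_mul, (isDist_prod hw).2, one_mul]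

lemma PE_mono (hw : ∀ a, IsDist (w a)) {F G : (∀ a, α a) → ℝ} (h : ∀ x, F x ≤ G x) :
    PE w F ≤ PE w G :=
  Finset.sum_le_sum fun x _ => mul_le_mul_of_nonneg_left (h x) ((isDist_prod hw).1 x)

lemma PE_add (F G : (∀ a, α a) → ℝ) : PE w (fun x => F x + G x) = PE w F + PE w G := by
  simp [PE, mul_add, Finset.sum_add_distrib]

lemma PE_sub (F G : (∀ a, α a) → ℝ) : PE w (fun x => F x - G x) = PE w F - PE w G := by
  simp [PE, mul_sub, Finset.sum_sub_distrib]

lemma PE_mul_left (c : ℝ) (F : (∀ a, α a) → ℝ) : PE w (fun x => c * F x) = c * PE w F := by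
  simp only [PE, Finset.mul_sum]
  exact Finset.sum_congr rfl fun x _ => by ring

lemma PE_sum {κ : Type} (s : Finset κ) (F : κ → (∀ a, α a) → ℝ) :
    PE w (fun x => ∑ k ∈ s, F k x) = ∑ k ∈ s, PE w (F k) := by
  simp only [PE, Finset.mul_sum]
  exact Finset.sum_comm

/-- Resampling one coordinate from its own marginal leaves the product law unchanged. -/
lemma PE_resample (hw : ∀ a, IsDist (w a)) (a : ι) (F : (∀ a, α a) → ℝ) :
    PE w F = PE w (fun x => ∑ v, w a v * F (Function.update x a v)) := by
  have h1 : PE w (fun x => ∑ v, w a v * F (Function.update x a v)) =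
      ∑ q : (∀ a, α a) × α a, ((∏ b, w b (q.1 b)) * w a q.2) * F (Function.update q.1 a q.2) := by
    rw [Fintype.sum_prod_type]
    simp only [PE, Finset.mul_sum, mul_assoc]
  have h2 : PE w F = ∑ q : (∀ a, α a) × α a, ((∏ b, w b (q.1 b)) * w a q.2) * F q.1 := by
    rw [Fintype.sum_prod_type]
    refine Finset.sum_congr rfl fun x _ => ?_
    have : ∀ v, (∏ b, w b (x b)) * w a v * F x = ((∏ b, w b (x b)) * F x) * w a v :=
      fun v => by ring
    simp only [this]
    rw [← Finset.mul_sum, (hw a).2, mul_one]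
  rw [h1, h2]
  -- exchanging coordinate `a` with the fresh sample is a weight-preserving involution
  let e : (∀ a, α a) × α a → (∀ a, α a) × α a := fun q => (Function.update q.1 a q.2, q.1 a)
  have he : Function.Involutive e := by
    rintro ⟨x, v⟩
    simp [e]
  refine Fintype.sum_equiv he.toPerm _ _ ?_
  rintro ⟨x, v⟩
  have hprod : ∀ z : ∀ a, α a, ∏ b, w b (z b) = w a (z a) * ∏ b ∈ Finset.univ.erase a, w b (z b) :=
    fun z => (Finset.mul_prod_erase _ _ (Finset.mem_univ a)).symm
  have hE : ∏ b ∈ Finset.univ.erase a, w b (Function.update x a v b) =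
      ∏ b ∈ Finset.univ.erase a, w b (x b) :=
    Finset.prod_congr rfl fun b hb => by rw [Function.update_of_ne (Finset.ne_of_mem_erase hb)]
  simp only [Function.Involutive.coe_toPerm, e, Function.update_idem, Function.update_eq_self]
  rw [hprod x, hprod (Function.update x a v), hE, Function.update_self]
  ring

lemma PE_eval (hw : ∀ a, IsDist (w a)) (a : ι) (F : α a → ℝ) :
    PE w (fun x => F (x a)) = ∑ v, w a v * F v := by
  rw [PE_resample hw a]
  simp only [Function.update_self]
  exact PE_const hw _

lemma PE_le_of_resample (hw : ∀ a, IsDist (w a)) (a : ι) (F : (∀ a, α a) → ℝ) (b : ℝ)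
    (h : ∀ x, ∑ v, w a v * F (Function.update x a v) ≤ b) : PE w F ≤ b := by
  rw [PE_resample hw a]
  exact (PE_mono hw h).trans (PE_const hw b).le

/-- If each `π a` pushes the weight `W a` forward to `w a`, then the coordinatewise map pushes the
product weight forward to the product weight. -/
lemma push_prod {β : ι → Type} [∀ a, Fintype (β a)] (W : ∀ a, β a → ℝ) (π : ∀ a, β a → α a)
    (h : ∀ a, ∀ F : α a → ℝ, ∑ c, W a c * F (π a c) = ∑ x, w a x * F x)
    (F : (∀ a, α a) → ℝ) :
    PE W (fun c => F (fun a => π a (c a))) = PE w F := by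
  classical
  have hwx : ∀ a x, w a x = ∑ c, W a c * (if π a c = x then 1 else 0) := by
    intro a x
    rw [h a (fun y => if y = x then 1 else 0)]
    simp
  have h2 : ∀ x : ∀ a, α a, ∏ a, w a (x a) =
      ∑ c : ∀ a, β a, (∏ a, W a (c a)) * (if (fun a => π a (c a)) = x then 1 else 0) := by
    intro x
    have := Finset.prod_univ_sum (fun a => (Finset.univ : Finset (β a)))
      (fun a c => W a c * (if π a c = x a then (1 : ℝ) else 0))
    rw [Fintype.piFinset_univ] at this
    simp only [hwx]
    rw [this]
    refine Finset.sum_congr rfl fun c _ => ?_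
    rw [Finset.prod_mul_distrib]
    congr 1
    rw [Finset.prod_ite_zero]
    simp [funext_iff]
  unfold PE
  simp only [h2, Finset.sum_mul]
  rw [Finset.sum_comm]
  refine Finset.sum_congr rfl fun c _ => ?_
  simp

end PE

section iid

variable {X : Type} [Fintype X] {p : X → ℝ}

/-- Restricting an i.i.d. block along an injection of index sets gives an i.i.d. block. -/
lemma PE_comp_inj {S T : Type} [Fintype S] [DecidableEq S] [Fintype T] [DecidableEq T]
    (hp : IsDist p) (f : S → T) (hf : Function.Injective f) (F : (S → X) → ℝ) :
    PE (fun _ : T => p) (fun x => F (x ∘ f)) = PE (fun _ : S => p) F := by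
  classical
  let U := {t : T // ¬ t ∈ Set.range f}
  let e : S ⊕ U ≃ T := (Equiv.sumCongr (Equiv.ofInjective f hf) (Equiv.refl _)).trans
    (Equiv.sumCompl (fun t => t ∈ Set.range f))
  have hel : ∀ s, e (Sum.inl s) = f s := fun s => rfl
  let E : (T → X) ≃ (S → X) × (U → X) :=
    (Equiv.arrowCongr e.symm (Equiv.refl X)).trans (Equiv.sumArrowEquivProdArrow S U X)
  have h1 : PE (fun _ : T => p) (fun x => F (x ∘ f)) =
      ∑ q : (S → X) × (U → X), ((∏ s, p (q.1 s)) * ∏ u, p (q.2 u)) * F q.1 := by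
    refine Fintype.sum_equiv E _ _ fun x => ?_
    have h3 : (E x).1 = x ∘ f := rfl
    have h4 : ∏ t, p (x t) = (∏ s, p ((E x).1 s)) * ∏ u, p ((E x).2 u) := by
      rw [← Equiv.prod_comp e, Fintype.prod_sum_type]
      rfl
    rw [h4, h3]
  rw [h1, Fintype.sum_prod_type]
  refine Finset.sum_congr rfl fun z _ => ?_
  have h5 := PE_const (w := fun _ : U => p) (fun _ => hp) ((∏ s, p (z s)) * F z)
  unfold PE at h5
  rw [← h5]
  exact Finset.sum_congr rfl fun u _ => by ring

lemma PE_succ (n : ℕ) (F : (Fin (n + 1) → X) → ℝ) :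
    PE (fun _ : Fin (n + 1) => p) F =
      PE (fun _ : Fin n => p) (fun x => ∑ a, p a * F (Fin.cons a x)) := by
  have h1 : PE (fun _ : Fin (n + 1) => p) F = ∑ q : X × (Fin n → X),
      (p q.1 * ∏ t, p (q.2 t)) * F (Fin.cons q.1 q.2) := by
    refine (Fintype.sum_equiv (Fin.consEquiv (fun _ : Fin (n + 1) => X)) _ _ fun q => ?_).symm
    simp [Fin.prod_univ_succ, Fin.consEquiv]
  rw [h1, Fintype.sum_prod_type, Finset.sum_comm]
  unfold PE
  refine Finset.sum_congr rfl fun x _ => ?_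
  rw [Finset.mul_sum]
  exact Finset.sum_congr rfl fun a _ => by ring

lemma sum_dist_sq (hp : IsDist p) (f : X → ℝ) (c : ℝ) :
    ∑ a, p a * (f a - c) ^ 2 =
      ∑ a, p a * (f a - ∑ b, p b * f b) ^ 2 + ((∑ b, p b * f b) - c) ^ 2 := by
  set μ := ∑ b, p b * f b with hμ
  have h : ∀ a, p a * (f a - c) ^ 2 = p a * (f a - μ) ^ 2 + 2 * (μ - c) * (p a * f a)
      + p a * (c ^ 2 - μ ^ 2) := fun a => by ring
  simp only [h, Finset.sum_add_distrib, ← Finset.mul_sum, ← Finset.sum_mul, hp.2, ← hμ]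
  ring

/-- Bounded differences: a function changing by at most `L` with each coordinate has variance at
most `n L²` under an i.i.d. law. -/
lemma variance_le (hp : IsDist p) (L : ℝ) (n : ℕ) : ∀ f : (Fin n → X) → ℝ,
    (∀ x t v, |f (Function.update x t v) - f x| ≤ L) →
    PE (fun _ : Fin n => p) (fun x => (f x - PE (fun _ : Fin n => p) f) ^ 2) ≤ n * L ^ 2 := by
  induction n with
  | zero =>
    intro f _
    simp [PE, Subsingleton.elim default Fin.elim0]
  | succ n ih =>
    intro f hf
    set g : (Fin n → X) → ℝ := fun x => ∑ a, p a * f (Fin.cons a x) with hg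
    have hm : PE (fun _ : Fin (n + 1) => p) f = PE (fun _ : Fin n => p) g := PE_succ n f
    have hgL : ∀ x t v, |g (Function.update x t v) - g x| ≤ L := by
      intro x t v
      simp only [hg]
      rw [← Finset.sum_sub_distrib]
      calc _ ≤ ∑ a, |p a * f (Fin.cons a (Function.update x t v)) - p a * f (Fin.cons a x)| :=
            Finset.abs_sum_le_sum_abs _ _
        _ ≤ ∑ a, p a * L := by
            refine Finset.sum_le_sum fun a _ => ?_
            rw [← mul_sub, abs_mul, abs_of_nonneg (hp.1 a), Fin.cons_update]
            exact mul_le_mul_of_nonneg_left (hf _ _ _) (hp.1 a)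
        _ = L := by rw [← Finset.sum_mul, hp.2, one_mul]
    rw [hm, PE_succ]
    have hstep : ∀ x : Fin n → X,
        ∑ a, p a * (f (Fin.cons a x) - PE (fun _ : Fin n => p) g) ^ 2 ≤
          L ^ 2 + (g x - PE (fun _ : Fin n => p) g) ^ 2 := by
      intro x
      rw [sum_dist_sq hp (fun a => f (Fin.cons a x))]
      refine add_le_add ?_ le_rfl
      -- the conditional variance is at most the mean square distance to any fixed value
      have hne : Nonempty X := by
        by_contra hne
        rw [not_nonempty_iff] at hne
        have := hp.2
        simp at this
      obtain ⟨a₀⟩ := hne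
      have h3 := sum_dist_sq hp (fun a => f (Fin.cons a x)) (f (Fin.cons a₀ x))
      have h4 : ∑ a, p a * (f (Fin.cons a x) - f (Fin.cons a₀ x)) ^ 2 ≤ ∑ a, p a * L ^ 2 := by
        refine Finset.sum_le_sum fun a _ => mul_le_mul_of_nonneg_left ?_ (hp.1 a)
        have := hf (Fin.cons a₀ x) 0 a
        rw [Fin.update_cons_zero] at this
        rw [← sq_abs]
        exact pow_le_pow_left₀ (abs_nonneg _) this 2
      rw [← Finset.sum_mul, hp.2, one_mul] at h4
      nlinarith [sq_nonneg ((∑ b, p b * f (Fin.cons b x)) - f (Fin.cons a₀ x))]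
    refine (PE_mono (fun _ => hp) hstep).trans ?_
    rw [PE_add, PE_const (fun _ => hp)]
    have := ih g hgL
    push_cast
    linarith

/-- The probability of the event `Q` under the i.i.d. law. -/
def Pr (p : X → ℝ) {n : ℕ} (Q : (Fin n → X) → Prop) : ℝ :=
  open Classical in PE (fun _ : Fin n => p) (fun x => if Q x then 1 else 0)

lemma Pr_nonneg (hp : IsDist p) {n : ℕ} (Q : (Fin n → X) → Prop) : 0 ≤ Pr p Q := by
  refine le_trans (PE_const (w := fun _ : Fin n => p) (fun _ => hp) 0).ge
    (PE_mono (fun _ => hp) fun x => ?_)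
  split_ifs <;> norm_num

lemma Pr_mono (hp : IsDist p) {n : ℕ} {Q Q' : (Fin n → X) → Prop} (h : ∀ x, Q x → Q' x) :
    Pr p Q ≤ Pr p Q' := by
  refine PE_mono (fun _ => hp) fun x => ?_
  by_cases h1 : Q x
  · simp [h1, h x h1]
  · by_cases h2 : Q' x <;> simp [h1, h2]

lemma Pr_or_le (hp : IsDist p) {n : ℕ} (Q Q' : (Fin n → X) → Prop) :
    Pr p (fun x => Q x ∨ Q' x) ≤ Pr p Q + Pr p Q' := by
  unfold Pr
  rw [← PE_add]
  refine PE_mono (fun _ => hp) fun x => ?_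
  by_cases h1 : Q x <;> by_cases h2 : Q' x <;> simp [h1, h2]

lemma Pr_not (hp : IsDist p) {n : ℕ} (Q : (Fin n → X) → Prop) :
    Pr p (fun x => ¬ Q x) = 1 - Pr p Q := by
  unfold Pr
  rw [eq_sub_iff_add_eq, ← PE_add]
  refine Eq.trans ?_ (PE_const (w := fun _ : Fin n => p) (fun _ => hp) 1)
  congr 1
  funext x
  by_cases h2 : Q x <;> simp [h2]

/-- Chebyshev's inequality for functions with bounded differences. -/
lemma chebyshev (hp : IsDist p) (L : ℝ) (n : ℕ) (f : (Fin n → X) → ℝ)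
    (hf : ∀ x t v, |f (Function.update x t v) - f x| ≤ L) (c : ℝ) (hc : 0 < c) :
    Pr p (fun x => c ≤ |f x - PE (fun _ : Fin n => p) f|) ≤ n * L ^ 2 / c ^ 2 := by
  rw [le_div_iff₀ (by positivity), mul_comm]
  refine le_trans ?_ (variance_le hp L n f hf)
  unfold Pr
  rw [← PE_mul_left]
  refine PE_mono (fun _ => hp) fun x => ?_
  split_ifs with h
  · rw [mul_one, ← sq_abs (f x - _)]
    exact pow_le_pow_left₀ hc.le h 2
  · rw [mul_zero]; positivity

end iid

/-! ### Sums of i.i.d. letters -/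

section sums

variable {X : Type} [Fintype X] {p : X → ℝ}

lemma PE_sum_letters (hp : IsDist p) (g : X → ℝ) (n : ℕ) :
    PE (fun _ : Fin n => p) (fun x => ∑ t, g (x t)) = n * ∑ a, p a * g a := by
  rw [PE_sum]
  simp only [PE_eval (w := fun _ : Fin n => p) (fun _ => hp) _ g]
  simp

lemma sum_letters_update (g : X → ℝ) (n : ℕ) (x : Fin n → X) (t : Fin n) (v : X) :
    |(∑ s, g (Function.update x t v s)) - ∑ s, g (x s)| ≤ 2 * ∑ a, |g a| := by
  have h1 : (∑ s, g (Function.update x t v s)) - ∑ s, g (x s) = g v - g (x t) := by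
    rw [← Finset.sum_sub_distrib, Finset.sum_eq_single t]
    · simp
    · intro s _ hs
      simp [Function.update_of_ne hs]
    · simp
  have h2 : ∀ a, |g a| ≤ ∑ a, |g a| := fun a =>
    Finset.single_le_sum (f := fun a => |g a|) (fun b _ => abs_nonneg _) (Finset.mem_univ a)
  rw [h1]
  have := abs_sub (g v) (g (x t))
  linarith [h2 v, h2 (x t)]

lemma weak_law (hp : IsDist p) (g : X → ℝ) (c : ℝ) (hc : 0 < c) :
    Tendsto (fun n : ℕ => Pr p (fun x : Fin n → X =>
      n * c ≤ |(∑ t, g (x t)) - n * ∑ a, p a * g a|)) atTop (nhds 0) := by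
  set L := 2 * ∑ a, |g a| with hL
  have hlim : Tendsto (fun n : ℕ => (L ^ 2 / c ^ 2) / (n : ℝ)) atTop (nhds 0) :=
    tendsto_const_div_atTop_nhds_zero_nat _
  refine squeeze_zero' (Eventually.of_forall fun n => Pr_nonneg hp _) ?_ hlim
  filter_upwards [eventually_gt_atTop 0] with n hn
  have hn' : (0 : ℝ) < n := by exact_mod_cast hn
  have h := chebyshev hp L n (fun x => ∑ t, g (x t)) (sum_letters_update g n) (n * c)
    (by positivity)
  rw [PE_sum_letters hp] at h
  refine h.trans (le_of_eq ?_)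
  field_simp

/-- First, second and fourth moments of a sum of centred i.i.d. letters. -/
lemma moments (hp : IsDist p) (h : X → ℝ) (h0 : ∑ a, p a * h a = 0) (n : ℕ) :
    PE (fun _ : Fin n => p) (fun x => ∑ t, h (x t)) = 0 ∧
    PE (fun _ : Fin n => p) (fun x => (∑ t, h (x t)) ^ 2) = n * ∑ a, p a * h a ^ 2 ∧
    PE (fun _ : Fin n => p) (fun x => (∑ t, h (x t)) ^ 4) ≤
      n ^ 2 * (3 * (∑ a, p a * h a ^ 2) ^ 2 + ∑ a, p a * h a ^ 4) := by
  set s2 := ∑ a, p a * h a ^ 2 with hs2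
  set s4 := ∑ a, p a * h a ^ 4 with hs4
  have hs2n : 0 ≤ s2 := Finset.sum_nonneg fun a _ => mul_nonneg (hp.1 a) (by positivity)
  have hs4n : 0 ≤ s4 := Finset.sum_nonneg fun a _ => mul_nonneg (hp.1 a) (by positivity)
  have h1 : ∀ n : ℕ, PE (fun _ : Fin n => p) (fun x => ∑ t, h (x t)) = 0 := fun n => by
    rw [PE_sum_letters hp, h0, mul_zero]
  have key2 : ∀ S : ℝ, ∑ a, p a * (h a + S) ^ 2 = s2 + S ^ 2 := by
    intro S
    have : ∀ a, p a * (h a + S) ^ 2 = p a * h a ^ 2 + 2 * S * (p a * h a) + S ^ 2 * p a :=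
      fun a => by ring
    simp only [this, Finset.sum_add_distrib, ← Finset.mul_sum, h0, hp.2, ← hs2]
    ring
  have key4 : ∀ S : ℝ, ∑ a, p a * (h a + S) ^ 4 =
      s4 + (4 * ∑ a, p a * h a ^ 3) * S + 6 * s2 * S ^ 2 + S ^ 4 := by
    intro S
    have : ∀ a, p a * (h a + S) ^ 4 = p a * h a ^ 4 + 4 * S * (p a * h a ^ 3) +
        6 * S ^ 2 * (p a * h a ^ 2) + 4 * S ^ 3 * (p a * h a) + S ^ 4 * p a :=
      fun a => by ring
    simp only [this, Finset.sum_add_distrib, ← Finset.mul_sum, h0, hp.2, ← hs2, ← hs4]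
    ring
  refine ⟨h1 n, ?_⟩
  have h2 : ∀ n : ℕ, PE (fun _ : Fin n => p) (fun x => (∑ t, h (x t)) ^ 2) = n * s2 := by
    intro n
    induction n with
    | zero => simp [PE]
    | succ n ih =>
      rw [PE_succ]
      simp only [Fin.sum_univ_succ, Fin.cons_zero, Fin.cons_succ, key2]
      rw [PE_add, PE_const (fun _ => hp), ih]
      push_cast; ring
  refine ⟨h2 n, ?_⟩
  induction n with
  | zero => simp [PE]
  | succ n ih =>
    rw [PE_succ]
    simp only [Fin.sum_univ_succ, Fin.cons_zero, Fin.cons_succ, key4]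
    rw [PE_add, PE_add, PE_add, PE_const (fun _ => hp), PE_mul_left, PE_mul_left, h1, h2]
    push_cast
    have : (0 : ℝ) ≤ n := Nat.cast_nonneg n
    nlinarith [mul_nonneg this hs4n, sq_nonneg s2]

/-- A polynomial minorant of a multiple of the indicator of `(0, ∞)`. -/
lemma poly_bound (c : ℝ) (hc : 0 < c) (u : ℝ) :
    (1 + 1 / c) * u + u ^ 2 - c * u ^ 4 ≤
      if 0 < u then (1 + 1 / c) ^ 2 + 1 / c else 0 := by
  set i := 1 / c with hi
  have hci : c * i = 1 := by rw [hi]; field_simp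
  have hi0 : 0 < i := by positivity
  split_ifs with h
  · have h1 : 2 * u ^ 2 - c * u ^ 4 ≤ i := by
      have : i - (2 * u ^ 2 - c * u ^ 4) = c * (u ^ 2 - i) ^ 2 := by
        linear_combination (2 * u ^ 2 - i) * hci
      nlinarith [mul_nonneg hc.le (sq_nonneg (u ^ 2 - i))]
    nlinarith [sq_nonneg (u - (1 + i)), sq_nonneg u]
  · push Not at h
    have h2 : 0 ≤ (1 + i) - (-u) + c * (-u) ^ 3 := by
      set v := -u
      have hv : 0 ≤ v := by simp only [v]; linarith
      by_cases hvi : v ^ 2 ≤ i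
      · nlinarith [sq_nonneg (v - 1), mul_nonneg hc.le (pow_nonneg hv 3)]
      · push Not at hvi
        have : v * 1 ≤ c * v ^ 3 := by
          rw [← hci]
          nlinarith [mul_nonneg hc.le (mul_nonneg hv (sub_nonneg.2 hvi.le))]
        linarith
    nlinarith [mul_nonneg (neg_nonneg.2 h) h2]

/-- A sum of non-degenerate centred i.i.d. letters is positive with probability bounded away
from `0`. -/
lemma Pr_pos_ge (hp : IsDist p) (h : X → ℝ) (h0 : ∑ a, p a * h a = 0)
    (hs : 0 < ∑ a, p a * h a ^ 2) :
    ∃ c > 0, ∀ n : ℕ, 0 < n → c ≤ Pr p (fun x : Fin n → X => 0 < ∑ t, h (x t)) := by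
  set s2 := ∑ a, p a * h a ^ 2 with hs2
  set K := 3 * s2 ^ 2 + ∑ a, p a * h a ^ 4 with hK
  have hs4n : 0 ≤ ∑ a, p a * h a ^ 4 :=
    Finset.sum_nonneg fun a _ => mul_nonneg (hp.1 a) (by positivity)
  have hK0 : 0 < K := by positivity
  set c := s2 / (2 * K) with hc
  have hc0 : 0 < c := by positivity
  set B := (1 + 1 / c) ^ 2 + 1 / c with hB
  have hB0 : 0 < B := by positivity
  refine ⟨s2 / 2 / B, by positivity, fun n hn => ?_⟩
  have hn' : (0 : ℝ) < n := by exact_mod_cast hn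
  obtain ⟨m1, m2, m4⟩ := moments hp h h0 n
  rw [← hs2] at m2
  rw [← hs2, ← hK] at m4
  have hr : 0 < √(n : ℝ) := Real.sqrt_pos.2 hn'
  have hr2 : √(n : ℝ) ^ 2 = n := Real.sq_sqrt hn'.le
  rw [div_le_iff₀ hB0]
  have e1 : PE (fun _ : Fin n => p) (fun x => (1 + 1 / c) * ((∑ t, h (x t)) / √n) +
      ((∑ t, h (x t)) / √n) ^ 2 - c * ((∑ t, h (x t)) / √n) ^ 4) ≤
      Pr p (fun x : Fin n → X => 0 < ∑ t, h (x t)) * B := by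
    unfold Pr
    rw [mul_comm, ← PE_mul_left]
    refine PE_mono (fun _ => hp) fun x => (poly_bound c hc0 _).trans (le_of_eq ?_)
    simp [div_pos_iff_of_pos_right hr, hB]
  refine le_trans ?_ e1
  have e2 : (fun x : Fin n → X => (1 + 1 / c) * ((∑ t, h (x t)) / √n) +
      ((∑ t, h (x t)) / √n) ^ 2 - c * ((∑ t, h (x t)) / √n) ^ 4) =
      fun x => ((1 + 1 / c) / √n) * (∑ t, h (x t)) + (1 / n) * (∑ t, h (x t)) ^ 2
        - (c / n ^ 2) * (∑ t, h (x t)) ^ 4 := by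
    funext x
    have hr4 : √(n : ℝ) ^ 4 = n ^ 2 := by
      rw [show √(n : ℝ) ^ 4 = (√(n : ℝ) ^ 2) ^ 2 by ring, hr2]
    rw [div_pow, div_pow, hr2, hr4]
    ring
  rw [e2, PE_sub, PE_add, PE_mul_left, PE_mul_left, PE_mul_left, m1, m2]
  have e3 : c / n ^ 2 * PE (fun _ : Fin n => p) (fun x => (∑ t, h (x t)) ^ 4) ≤ s2 / 2 := by
    calc _ ≤ c / n ^ 2 * (n ^ 2 * K) := mul_le_mul_of_nonneg_left m4 (by positivity)
      _ = s2 / 2 := by rw [hc]; field_simp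
  have e4 : 1 / (n : ℝ) * (n * s2) = s2 := by field_simp
  rw [e4]
  linarith

/-- If letter sums stay below `n D` with probability tending to one, then either the mean is
strictly below `D`, or the letter function equals `D` on the whole support. -/
lemma mean_lt_or_const (hp : IsDist p) (g : X → ℝ) (D : ℝ)
    (h : Tendsto (fun n : ℕ => Pr p (fun x : Fin n → X => n * D < ∑ t, g (x t)))
      atTop (nhds 0)) :
    (∑ a, p a * g a < D) ∨ (∀ a, 0 < p a → g a = D) := by
  by_contra hcon
  push Not at hcon
  obtain ⟨hD, a₀, ha₀, hga₀⟩ := hcon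
  set μ := ∑ a, p a * g a with hμ
  rcases hD.lt_or_eq with hlt | heq
  · have hw := weak_law hp g (μ - D) (by linarith)
    have hsum := h.add hw
    have h1 : ∀ n : ℕ, 1 ≤ Pr p (fun x : Fin n → X => n * D < ∑ t, g (x t)) +
        Pr p (fun x : Fin n → X => n * (μ - D) ≤ |(∑ t, g (x t)) - n * ∑ a, p a * g a|) := by
      intro n
      refine le_trans ?_ (Pr_or_le hp _ _)
      rw [← PE_const (w := fun _ : Fin n => p) (fun _ => hp) 1]
      refine PE_mono (fun _ => hp) fun x => ?_
      rw [if_pos]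
      by_cases hx : n * D < ∑ t, g (x t)
      · exact Or.inl hx
      · right
        rw [← hμ, abs_sub_comm]
        refine le_trans ?_ (le_abs_self _)
        nlinarith
    have := ge_of_tendsto' hsum h1
    norm_num at this
  · have h0 : ∑ a, p a * (g a - μ) = 0 := by
      simp only [mul_sub, Finset.sum_sub_distrib, ← Finset.sum_mul, hp.2, ← hμ]
      ring
    have hs : 0 < ∑ a, p a * (g a - μ) ^ 2 := by
      refine Finset.sum_pos' (fun a _ => mul_nonneg (hp.1 a) (sq_nonneg _))
        ⟨a₀, Finset.mem_univ _, mul_pos ha₀ ?_⟩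
      have : g a₀ - μ ≠ 0 := sub_ne_zero.2 (heq ▸ hga₀)
      positivity
    obtain ⟨c, hc, hge⟩ := Pr_pos_ge hp (fun a => g a - μ) h0 hs
    have h1 : ∀ᶠ n : ℕ in atTop, c ≤ Pr p (fun x : Fin n → X => n * D < ∑ t, g (x t)) := by
      filter_upwards [eventually_gt_atTop 0] with n hn
      refine (hge n hn).trans (Pr_mono hp fun x hx => ?_)
      simp only [Finset.sum_sub_distrib, Finset.sum_const, Finset.card_univ, Fintype.card_fin,
        nsmul_eq_mul] at hx
      rw [heq]
      linarith
    have := ge_of_tendsto h h1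
    linarith

end sums

/-! ### Blowing up a set of non-negligible probability -/

section blowup

variable {X : Type}

lemma hammingDist_update_le [DecidableEq X] {n : ℕ} (x : Fin n → X) (t : Fin n) (v : X) :
    hammingDist (Function.update x t v) x ≤ 1 := by
  unfold hammingDist
  refine (Finset.card_le_card (t := {t}) fun s hs => ?_).trans (Finset.card_singleton t).le
  rw [Finset.mem_filter] at hs
  by_contra hst
  exact hs.2 (Function.update_of_ne (by simpa using hst) _ _)

/-- The Hamming distance from `z` to the nonempty set `A`. -/
def distTo [DecidableEq X] {n : ℕ} (A : Finset (Fin n → X)) (hA : A.Nonempty)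
    (z : Fin n → X) : ℕ :=
  A.inf' hA (fun a => hammingDist z a)

lemma distTo_le_add [DecidableEq X] {n : ℕ} (A : Finset (Fin n → X)) (hA : A.Nonempty)
    (z z' : Fin n → X) : distTo A hA z ≤ distTo A hA z' + hammingDist z z' := by
  obtain ⟨a, ha, hza⟩ := Finset.exists_mem_eq_inf' hA (fun a => hammingDist z' a)
  have h1 : distTo A hA z ≤ hammingDist z a := Finset.inf'_le _ ha
  have h2 := hammingDist_triangle z z' a
  have h3 : distTo A hA z' = hammingDist z' a := hza
  omega

lemma distTo_lip [DecidableEq X] {n : ℕ} (A : Finset (Fin n → X)) (hA : A.Nonempty)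
    (z z' : Fin n → X) : |(distTo A hA z : ℝ) - distTo A hA z'| ≤ hammingDist z z' := by
  have h1 : (distTo A hA z : ℝ) ≤ distTo A hA z' + hammingDist z z' := by
    exact_mod_cast distTo_le_add A hA z z'
  have h2 : (distTo A hA z' : ℝ) ≤ distTo A hA z + hammingDist z z' := by
    have := distTo_le_add A hA z' z
    rw [hammingDist_comm] at this
    exact_mod_cast this
  rw [abs_le]
  constructor <;> linarith

variable [Fintype X] {p : X → ℝ}

/-- The mean Hamming distance to a set of probability at least `δ` is at most of order `√(n / δ)`. -/
lemma mean_distTo_le [DecidableEq X] (hp : IsDist p) {n : ℕ} (A : Finset (Fin n → X))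
    (hA : A.Nonempty) (δ ε : ℝ) (hδ : 0 < δ) (hε : 0 < ε) (hPA : δ ≤ Pr p (fun x => x ∈ A))
    (hn : 16 ≤ ε ^ 2 * δ * n) :
    PE (fun _ : Fin n => p) (fun z => (distTo A hA z : ℝ)) ≤ n * (ε / 4) := by
  set f : (Fin n → X) → ℝ := fun z => (distTo A hA z : ℝ) with hf
  set μ := PE (fun _ : Fin n => p) f with hμ
  have hvar := variance_le hp 1 n f (fun x t v => (distTo_lip A hA _ _).trans
    (by exact_mod_cast hammingDist_update_le x t v))
  rw [← hμ] at hvar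
  have h1 : δ * μ ^ 2 ≤ n := by
    calc δ * μ ^ 2 ≤ μ ^ 2 * Pr p (fun x => x ∈ A) := by
          rw [mul_comm]; exact mul_le_mul_of_nonneg_left hPA (sq_nonneg _)
      _ ≤ PE (fun _ : Fin n => p) (fun x => (f x - μ) ^ 2) := by
          unfold Pr
          rw [← PE_mul_left]
          refine PE_mono (fun _ => hp) fun x => ?_
          split_ifs with hx
          · have h0 : distTo A hA x = 0 := by
              have : distTo A hA x ≤ hammingDist x x := Finset.inf'_le _ hx
              simpa using this
            simp [hf, h0]
          · rw [mul_zero]; positivity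
      _ ≤ n := by simpa using hvar
  by_contra hcon
  push Not at hcon
  have hn0 : (0 : ℝ) < n := by
    by_contra h
    have : (n : ℝ) = 0 := le_antisymm (not_lt.1 h) (Nat.cast_nonneg n)
    rw [this] at hn
    norm_num at hn
  have h2 : (n * (ε / 4)) ^ 2 < μ ^ 2 := pow_lt_pow_left₀ hcon (by positivity) (by norm_num)
  nlinarith [mul_lt_mul_of_pos_left h2 hδ, mul_le_mul_of_nonneg_left hn hn0.le]

/-- With high probability a long i.i.d. block agrees, off a small set of positions, with a
concatenation of elements of `A`. The blocks sit at the positions `f (b, ·)`. -/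
lemma block_cover (hp : IsDist p) {n : ℕ} (A : Finset (Fin n → X))
    (δ ε : ℝ) (hδ : 0 < δ) (hε : 0 < ε) (hPA : δ ≤ Pr p (fun x => x ∈ A))
    (hn : 16 ≤ ε ^ 2 * δ * n) {q m : ℕ} (f : Fin q × Fin n → Fin m)
    (hf : Function.Injective f) (hm : 0 < m) (hr : (m : ℝ) - q * n ≤ ε / 2 * m) :
    Pr p (fun x : Fin m → X => ¬ ∃ T : Finset (Fin m), (T.card : ℝ) ≤ ε * m ∧
      ∃ a : Fin q → Fin n → X, (∀ b, a b ∈ A) ∧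
        ∀ t, t ∉ T → ∃ b s, t = f (b, s) ∧ x t = a b s) ≤ 16 / ε ^ 2 / m := by
  classical
  have hm' : (0 : ℝ) < m := by exact_mod_cast hm
  have hA : A.Nonempty := by
    by_contra h
    rw [Finset.not_nonempty_iff_eq_empty] at h
    simp [h, Pr, PE] at hPA
    linarith
  have hqn : (q : ℝ) * n ≤ m := by
    have := Fintype.card_le_of_injective f hf
    simp at this
    exact_mod_cast this
  have hinj : ∀ b, Function.Injective (fun s => f (b, s)) := fun b s s' h => by
    have := hf h
    simpa using this
  set Z : (Fin m → X) → ℝ := fun x => ∑ b, (distTo A hA (x ∘ fun s => f (b, s)) : ℝ) with hZ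
  have hEZ : PE (fun _ : Fin m => p) Z ≤ m * (ε / 4) := by
    rw [hZ, PE_sum]
    have : ∀ b ∈ (Finset.univ : Finset (Fin q)), PE (fun _ : Fin m => p)
        (fun x => (distTo A hA (x ∘ fun s => f (b, s)) : ℝ)) ≤ n * (ε / 4) := by
      intro b _
      rw [PE_comp_inj hp (fun s => f (b, s)) (hinj b) (fun z => (distTo A hA z : ℝ))]
      exact mean_distTo_le hp A hA δ ε hδ hε hPA hn
    refine (Finset.sum_le_sum this).trans ?_
    simp only [Finset.sum_const, Finset.card_univ, Fintype.card_fin, nsmul_eq_mul]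
    nlinarith
  have hlip : ∀ x t v, |Z (Function.update x t v) - Z x| ≤ 1 := by
    intro x t v
    simp only [hZ]
    rw [← Finset.sum_sub_distrib]
    refine (Finset.abs_sum_le_sum_abs _ _).trans ?_
    by_cases ht : ∃ b s, f (b, s) = t
    · obtain ⟨b, s, rfl⟩ := ht
      rw [Finset.sum_eq_single b]
      · refine (distTo_lip A hA _ _).trans ?_
        rw [show (Function.update x (f (b, s)) v ∘ fun s => f (b, s)) =
          Function.update (x ∘ fun s => f (b, s)) s v from
          Function.update_comp_eq_of_injective x (hinj b) s v]
        exact_mod_cast hammingDist_update_le _ s v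
      · intro b' _ hb'
        rw [show (Function.update x (f (b, s)) v ∘ fun s => f (b', s)) =
          x ∘ fun s => f (b', s) from Function.update_comp_eq_of_forall_ne x v
            (fun s' h => hb' (by have := hf h; simp at this; exact this.1))]
        simp
      · simp
    · push Not at ht
      rw [Finset.sum_eq_zero]
      · norm_num
      · intro b _
        rw [show (Function.update x t v ∘ fun s => f (b, s)) = x ∘ fun s => f (b, s) from
          Function.update_comp_eq_of_forall_ne x v (ht b)]
        simp
  have hch := chebyshev hp 1 m Z hlip (ε / 4 * m) (by positivity)
  refine le_trans (Pr_mono hp fun x hx => ?_) (hch.trans (le_of_eq (by field_simp; norm_num)))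
  by_contra hsmall
  push Not at hsmall
  have hZx : Z x ≤ ε / 2 * m := by
    have := (abs_lt.1 hsmall).2
    linarith
  apply hx
  have hex : ∀ b, ∃ a ∈ A, distTo A hA (x ∘ fun s => f (b, s)) =
      hammingDist (x ∘ fun s => f (b, s)) a := fun b =>
    Finset.exists_mem_eq_inf' hA (fun a => hammingDist (x ∘ fun s => f (b, s)) a)
  choose a haA had using hex
  set G : Finset (Fin q × Fin n) := Finset.univ.filter (fun u => x (f u) = a u.1 u.2) with hG
  refine ⟨(G.image f)ᶜ, ?_, a, haA, ?_⟩
  · have h1 : ((G.image f)ᶜ).card + G.card = m := by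
      rw [← Finset.card_image_of_injective G hf]
      simp
    have h2 : (G.card : ℝ) + Z x = q * n := by
      have e1 : G.card + (Finset.univ.filter
          (fun u : Fin q × Fin n => ¬ x (f u) = a u.1 u.2)).card = q * n := by
        rw [hG, Finset.card_filter_add_card_filter_not]
        simp
      have e2 : Z x = ((Finset.univ.filter
          (fun u : Fin q × Fin n => ¬ x (f u) = a u.1 u.2)).card : ℝ) := by
        simp only [hZ, had, hammingDist]
        rw [Finset.card_filter, Fintype.sum_prod_type]
        push_cast
        refine Finset.sum_congr rfl fun b _ => ?_
        rw [Finset.card_filter]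
        push_cast
        rfl
      rw [e2]
      exact_mod_cast e1
    have h1' : (((G.image f)ᶜ).card : ℝ) + G.card = m := by exact_mod_cast h1
    linarith
  · intro t ht
    rw [Finset.mem_compl, not_not, Finset.mem_image] at ht
    obtain ⟨⟨b, s⟩, hu, rfl⟩ := ht
    exact ⟨b, s, rfl, (Finset.mem_filter.1 hu).2⟩

/-- Hamming balls of small relative radius have small exponential size. -/
lemma hamming_ball {Y : Type} [Fintype Y] [DecidableEq Y] (β : ℝ) (hβ : 0 < β) :
    ∃ κ > 0, ∀ (m : ℕ) (y : Fin m → Y),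
      ((Finset.univ.filter (fun y' => (hammingDist y y' : ℝ) ≤ κ * m)).card : ℝ) ≤
        (2 : ℝ) ^ (β * m) := by
  -- weight `s ^ hammingDist`, with `1 + |Y| s ≤ 2 ^ (β / 2)` and `s ^ (-κ) = 2 ^ (β / 2)`
  set K : ℝ := Fintype.card Y + 1 with hK
  have hK0 : 0 < K := by positivity
  have hb1 : 1 < (2 : ℝ) ^ (β / 2) := Real.one_lt_rpow (by norm_num) (by linarith)
  set s : ℝ := min (1 / 2) (((2 : ℝ) ^ (β / 2) - 1) / K) with hs
  have hs0 : 0 < s := lt_min (by norm_num) (div_pos (by linarith) hK0)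
  have hs1 : s < 1 := (min_le_left _ _).trans_lt (by norm_num)
  have hsK : 1 + K * s ≤ (2 : ℝ) ^ (β / 2) := by
    have : s ≤ ((2 : ℝ) ^ (β / 2) - 1) / K := min_le_right _ _
    rw [le_div_iff₀ hK0] at this
    linarith
  have hlog : Real.log s < 0 := Real.log_neg hs0 hs1
  have hl2 : 0 < Real.log 2 := Real.log_pos (by norm_num)
  set κ : ℝ := (β / 2) * Real.log 2 / (-Real.log s) with hκ
  have hsκ : s ^ (-κ) = (2 : ℝ) ^ (β / 2) := by
    rw [Real.rpow_def_of_pos hs0, Real.rpow_def_of_pos (by norm_num)]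
    congr 1
    rw [hκ]
    have := hlog.ne
    field_simp
  refine ⟨κ, div_pos (by positivity) (by linarith), fun m y => ?_⟩
  have htot : ∑ y' : Fin m → Y, s ^ (hammingDist y y') ≤ (1 + K * s) ^ m := by
    have h1 : ∀ y' : Fin m → Y, s ^ (hammingDist y y') =
        ∏ t, (if y t ≠ y' t then s else 1) := by
      intro y'
      rw [Finset.prod_ite]
      simp [hammingDist]
    have h2 := Finset.prod_univ_sum (fun _ : Fin m => (Finset.univ : Finset Y))
      (fun t v => if y t ≠ v then s else 1)
    rw [Fintype.piFinset_univ] at h2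
    simp only [h1]
    rw [← h2]
    have h3 : ∀ t ∈ (Finset.univ : Finset (Fin m)),
        ∑ v, (if y t ≠ v then s else 1) ≤ 1 + K * s := by
      intro t _
      calc ∑ v, (if y t ≠ v then s else 1) ≤ ∑ v, (s + if y t = v then 1 else 0) := by
            refine Finset.sum_le_sum fun v _ => ?_
            by_cases h : y t = v
            · simp [h, hs0.le]
            · simp [h]
        _ = Fintype.card Y * s + 1 := by
            rw [Finset.sum_add_distrib]
            simp
        _ ≤ 1 + K * s := by rw [hK]; linarith
    refine (Finset.prod_le_prod (fun t _ => Finset.sum_nonneg fun v _ => ?_) h3).trans ?_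
    · split_ifs <;> linarith
    · simp
  set Bl := Finset.univ.filter (fun y' : Fin m → Y => (hammingDist y y' : ℝ) ≤ κ * m)
  have hball : (Bl.card : ℝ) * s ^ (κ * m) ≤ (1 + K * s) ^ m := by
    refine le_trans ?_ htot
    rw [← nsmul_eq_mul, ← Finset.sum_const]
    refine le_trans (Finset.sum_le_sum (g := fun y' => s ^ (hammingDist y y')) fun y' hy' => ?_)
      (Finset.sum_le_univ_sum_of_nonneg fun y' => by positivity)
    rw [← Real.rpow_natCast]
    exact Real.rpow_le_rpow_of_exponent_ge hs0 hs1.le (Finset.mem_filter.1 hy').2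
  have hpos : 0 < s ^ (κ * m) := Real.rpow_pos_of_pos hs0 _
  have h5 : (Bl.card : ℝ) ≤ (1 + K * s) ^ m * s ^ (-κ * m) := by
    rw [neg_mul, Real.rpow_neg hs0.le, ← div_eq_mul_inv, le_div_iff₀ hpos]
    exact hball
  refine h5.trans ?_
  rw [Real.rpow_mul hs0.le, hsκ, Real.rpow_natCast, ← mul_pow]
  have h6 : (2 : ℝ) ^ (β * m) = ((2 : ℝ) ^ (β / 2) * (2 : ℝ) ^ (β / 2)) ^ m := by
    rw [← Real.rpow_add (by norm_num), add_halves, Real.rpow_mul (by norm_num),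
      Real.rpow_natCast]
  rw [h6]
  refine pow_le_pow_left₀ (by positivity) ?_ m
  exact mul_le_mul_of_nonneg_right hsK (by positivity)

end blowup

/-! ### From one good source code to good source codes at all block lengths -/

section amplify

/-- Some residue class mod `L` carries at least a fraction `1 / L` of the sum. -/
lemma exists_heavy {m : ℕ} (L : ℕ) (hL : 0 < L) (e : Fin m → ℝ) :
    ∃ T : Finset (Fin m), (T.card : ℝ) ≤ m / L + 1 ∧ (∑ t, e t) ≤ L * ∑ t ∈ T, e t := by
  classical
  let c : Fin m → Fin L := fun t => ⟨t.1 % L, Nat.mod_lt _ hL⟩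
  have h1 : ∑ r, ∑ t ∈ Finset.univ.filter (fun t => c t = r), e t = ∑ t, e t :=
    Finset.sum_fiberwise Finset.univ c e
  have hne : (Finset.univ : Finset (Fin L)).Nonempty := ⟨⟨0, hL⟩, Finset.mem_univ _⟩
  obtain ⟨r, _, hr⟩ := Finset.exists_le_of_sum_le (s := (Finset.univ : Finset (Fin L)))
    (f := fun _ => (∑ t, e t) / L)
    (g := fun r => ∑ t ∈ Finset.univ.filter (fun t => c t = r), e t) hne (by
      rw [h1]
      simp only [Finset.sum_const, Finset.card_univ, Fintype.card_fin, nsmul_eq_mul]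
      have : (L : ℝ) ≠ 0 := by positivity
      exact le_of_eq (by field_simp))
  refine ⟨Finset.univ.filter (fun t => c t = r), ?_, ?_⟩
  · have h2 : (Finset.univ.filter (fun t => c t = r)).card ≤ (Finset.range (m / L + 1)).card := by
      refine Finset.card_le_card_of_injOn (fun t => t.1 / L) ?_ ?_
      · intro t _
        simp only [Finset.coe_range, Set.mem_Iio]
        exact Nat.lt_succ_of_le (Nat.div_le_div_right t.2.le)
      · intro t ht t' ht' htt
        simp only [Finset.coe_filter, Finset.mem_univ, true_and, Set.mem_ofPred_eq, c] at ht ht'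
        have h3 : t.1 % L = t'.1 % L := by
          have := ht.trans ht'.symm
          simpa using this
        apply Fin.ext
        have e1 := Nat.div_add_mod t.1 L
        have e2 := Nat.div_add_mod t'.1 L
        simp only at htt
        rw [← e1, ← e2, h3, htt]
    rw [Finset.card_range] at h2
    calc ((Finset.univ.filter (fun t => c t = r)).card : ℝ) ≤ ((m / L + 1 : ℕ) : ℝ) := by
          exact_mod_cast h2
      _ ≤ m / L + 1 := by push_cast; linarith [@Nat.cast_div_le ℝ _ _ _ m L]
  · have hL' : (0 : ℝ) < L := by exact_mod_cast hL
    have hr' := (div_le_iff₀ hL').1 hr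
    linarith

variable {X Y : Type} {d : X → Y → ℝ}

/-- The reproduction `y` of `x`, replaced by the best letters `best (x t)` on `T`. -/
def patch {m : ℕ} (best : X → Y) (T : Finset (Fin m)) (x : Fin m → X) (y : Fin m → Y) :
    Fin m → Y :=
  T.piecewise (fun t => best (x t)) y

/-- When the best achievable distortion leaves slack `c L ε m`, repairing a few additional positions
absorbs the cost of the repaired set `T`. -/
lemma exists_patch (best : X → Y) (hbest : ∀ x y, d x (best x) ≤ d x y)
    (c : ℝ) (hc : ∀ x, d x (best x) ≤ c) (hc0 : 0 ≤ c) (L : ℕ) (hL : 0 < L) {m : ℕ} (ε D : ℝ)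
    (x : Fin m → X) (y : Fin m → Y) (T : Finset (Fin m)) (hT : (T.card : ℝ) ≤ ε * m)
    (hdist : ∑ t ∈ Tᶜ, d (x t) (y t) ≤ m * D)
    (hslack : c * (ε * m) * L ≤ m * D - ∑ t, d (x t) (best (x t))) :
    ∃ T' : Finset (Fin m), (T'.card : ℝ) ≤ ε * m + (m / L + 1) ∧
      ∑ t, d (x t) (patch best T' x y t) ≤ m * D := by
  classical
  set e : Fin m → ℝ := fun t => if t ∈ T then 0 else d (x t) (y t) - d (x t) (best (x t)) with he
  have he0 : ∀ t, 0 ≤ e t := by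
    intro t
    simp only [he]
    split_ifs
    · exact le_rfl
    · linarith [hbest (x t) (y t)]
  obtain ⟨T₂, hT₂, hheavy⟩ := exists_heavy L hL e
  refine ⟨T ∪ T₂, ?_, ?_⟩
  · have : ((T ∪ T₂).card : ℝ) ≤ T.card + T₂.card := by exact_mod_cast Finset.card_union_le _ _
    linarith
  · set s := m * D - ∑ t, d (x t) (best (x t)) with hs
    have h1 : ∑ t, d (x t) (patch best (T ∪ T₂) x y t) ≤
        ∑ t, d (x t) (best (x t)) + (∑ t, e t - ∑ t ∈ T₂, e t) := by
      have : ∑ t ∈ T₂, e t = ∑ t, if t ∈ T₂ then e t else 0 := by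
        simp [Finset.sum_ite_mem]
      rw [this, ← Finset.sum_sub_distrib, ← Finset.sum_add_distrib]
      refine Finset.sum_le_sum fun t _ => ?_
      by_cases h2 : t ∈ T₂
      · simp [patch, h2]
      · by_cases h1 : t ∈ T
        · simp [patch, h1, h2, he]
        · simp [patch, h1, h2, he]
    have h2 : ∑ t, e t ≤ s + c * (ε * m) := by
      have e1 : ∑ t, e t = ∑ t ∈ Tᶜ, (d (x t) (y t) - d (x t) (best (x t))) := by
        rw [← Finset.sum_add_sum_compl T e, Finset.sum_eq_zero (s := T) (by
          intro t ht; simp [he, ht]), zero_add]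
        refine Finset.sum_congr rfl fun t ht => ?_
        rw [Finset.mem_compl] at ht
        simp [he, ht]
      have e2 : ∑ t ∈ T, d (x t) (best (x t)) ≤ c * (ε * m) := by
        calc _ ≤ ∑ t ∈ T, c := Finset.sum_le_sum fun t _ => hc (x t)
          _ = c * T.card := by rw [Finset.sum_const, nsmul_eq_mul, mul_comm]
          _ ≤ c * (ε * m) := mul_le_mul_of_nonneg_left hT hc0
      have e3 := Finset.sum_add_sum_compl T (fun t => d (x t) (best (x t)))
      rw [e1, Finset.sum_sub_distrib]
      linarith
    have hL' : (1 : ℝ) ≤ L := by exact_mod_cast hL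
    have h3 : 0 ≤ ∑ t ∈ T₂, e t := Finset.sum_nonneg fun t _ => he0 t
    have h4 : (L : ℝ) * (∑ t, e t - ∑ t ∈ T₂, e t) ≤ L * s := by
      nlinarith
    have h5 := le_of_mul_le_mul_left h4 (by linarith)
    linarith

variable [Fintype X] {p : X → ℝ}

/-- The deterministic source code with encoder `e` and decoder `f`, as a point mass. -/
def detCode [DecidableEq X] [Fintype Y] {m K : ℕ} (e : (Fin m → X) → Fin K)
    (f : Fin K → Fin m → Y) : RandCode (Fin m → X) (Fin K) (Fin K) (Fin m → Y) where
  p := open Classical in fun ef => if ef = (e, f) then 1 else 0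
  isDist := by
    classical
    refine ⟨fun ef => ?_, ?_⟩
    · beta_reduce
      split_ifs <;> norm_num
    · simp

/-- Codebooks of rate `R` whose excess probability vanishes bound the rate-distortion function. -/
lemma RP_le_of_codebooks [DecidableEq X] [Fintype Y] [Nonempty Y] (hp : IsDist p) (D R : ℝ)
    (hR : 0 < R) (e : ℕ → ℝ) (he : Tendsto e atTop (nhds 0))
    (hcode : ∀ᶠ m : ℕ in atTop, ∃ K : Finset (Fin m → Y), K.card ≤ nMsg R m ∧
      Pr p (fun x : Fin m → X => ¬ ∃ y ∈ K, dPow d m x y ≤ m * D) ≤ e m) :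
    RP p d D ≤ ENNReal.ofReal R := by
  classical
  have hpos : ∀ m, 0 < nMsg R m := fun m => by unfold nMsg; positivity
  have hex : ∀ m : ℕ, ∃ τ : RandCode (Fin m → X) (Fin (nMsg R m)) (Fin (nMsg R m)) (Fin m → Y),
      0 ≤ srcExcess p d D R m τ ∧
      ∀ K : Finset (Fin m → Y), K.card ≤ nMsg R m →
      Pr p (fun x : Fin m → X => ¬ ∃ y ∈ K, dPow d m x y ≤ m * D) ≤ e m →
        srcExcess p d D R m τ ≤ e m := by
    intro m
    have hsrc : ∀ (en : (Fin m → X) → Fin (nMsg R m)) (f : Fin (nMsg R m) → Fin m → Y),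
        srcExcess p d D R m (detCode en f) =
          Pr p (fun x : Fin m → X => (m : ℝ) * D < dPow d m x (f (en x))) := by
      intro en f
      unfold srcExcess detCode Pr PE iidP
      simp
    by_cases hK : ∃ K : Finset (Fin m → Y), K.card ≤ nMsg R m ∧
      Pr p (fun x : Fin m → X => ¬ ∃ y ∈ K, dPow d m x y ≤ m * D) ≤ e m
    · obtain ⟨K, hKc, hKe⟩ := hK
      -- list the codebook, padded with an arbitrary word
      let f : Fin (nMsg R m) → Fin m → Y := fun k =>
        if h : k.1 < K.card then (K.equivFin.symm ⟨k.1, h⟩).1 else fun _ => Classical.arbitrary Y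
      have hf : ∀ y ∈ K, ∃ k, f k = y := by
        intro y hy
        refine ⟨⟨(K.equivFin ⟨y, hy⟩).1, (K.equivFin ⟨y, hy⟩).2.trans_le hKc⟩, ?_⟩
        simp [f]
      let en : (Fin m → X) → Fin (nMsg R m) := fun x =>
        if h : ∃ k, dPow d m x (f k) ≤ m * D then h.choose else ⟨0, hpos m⟩
      refine ⟨detCode en f, ?_, fun _ _ _ => ?_⟩
      · rw [hsrc]; exact Pr_nonneg hp _
      · rw [hsrc]
        refine (Pr_mono hp fun x hx => ?_).trans hKe
        rintro ⟨y, hy, hyd⟩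
        obtain ⟨k, rfl⟩ := hf y hy
        have h : ∃ k, dPow d m x (f k) ≤ m * D := ⟨k, hyd⟩
        have : dPow d m x (f (en x)) ≤ m * D := by
          simp only [en, dif_pos h]
          exact h.choose_spec
        linarith
    · refine ⟨detCode (fun _ => ⟨0, hpos m⟩) (fun _ _ => Classical.arbitrary Y), ?_,
        fun K h1 h2 => (hK ⟨K, h1, h2⟩).elim⟩
      rw [hsrc]; exact Pr_nonneg hp _
  choose τ hτ0 hτ using hex
  refine sInf_le ⟨R, hR, ⟨τ, ?_⟩, rfl⟩
  refine squeeze_zero' (Eventually.of_forall hτ0) ?_ he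
  filter_upwards [hcode] with m ⟨K, h1, h2⟩
  exact hτ m K h1 h2

end amplify

/-! ### A strong converse for source coding -/

section core

variable {X Y : Type} [Fintype X] {p : X → ℝ} {d : X → Y → ℝ}

/-- Off an event of vanishing probability, a reproduction that meets the distortion budget outside
a small set of positions can be repaired within `κ m` positions to meet it everywhere. -/
lemma repair (hp : IsDist p) (hd : ∀ x y, 0 ≤ d x y) (D : ℝ)
    (best : X → Y) (hbest : ∀ x y, d x (best x) ≤ d x y)
    (hfeas : Tendsto (fun n : ℕ => Pr p (fun x : Fin n → X =>
      n * D < ∑ t, d (x t) (best (x t)))) atTop (nhds 0)) (κ : ℝ) (hκ : 0 < κ) :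
    ∃ ε > 0, ∃ bad : ∀ m : ℕ, (Fin m → X) → Prop,
      Tendsto (fun m => Pr p (bad m)) atTop (nhds 0) ∧
      ∀ᶠ m : ℕ in atTop, ∀ x, ¬ bad m x → ∀ (T : Finset (Fin m)) (y : Fin m → Y),
        (T.card : ℝ) ≤ ε * m → ∑ t ∈ Tᶜ, d (x t) (y t) ≤ m * D →
        ((∀ a, 0 < p a → d a (best a) = D) →
          ∀ t, t ∉ T → d (x t) (y t) = d (x t) (best (x t))) →
        ∃ T' : Finset (Fin m), (T'.card : ℝ) ≤ κ * m ∧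
          ∑ t, d (x t) (patch best T' x y t) ≤ m * D := by
  rcases mean_lt_or_const hp (fun a => d a (best a)) D hfeas with hlt | hconst
  · set μ := ∑ a, p a * d a (best a) with hμ
    set c := ∑ a, d a (best a) with hc
    have hc0 : 0 ≤ c := Finset.sum_nonneg fun a _ => hd _ _
    have hcle : ∀ a, d a (best a) ≤ c := fun a =>
      Finset.single_le_sum (f := fun a => d a (best a)) (fun b _ => hd _ _) (Finset.mem_univ a)
    set L : ℕ := ⌈4 / κ⌉₊ + 1 with hL
    have hL0 : 0 < L := Nat.succ_pos _
    have hL0' : (0 : ℝ) < L := by exact_mod_cast hL0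
    have hLκ : 4 / κ ≤ L := by
      rw [hL]; push_cast
      linarith [Nat.le_ceil (4 / κ)]
    have hη : 0 < D - μ := by linarith
    set ε := min (κ / 4) ((D - μ) / (2 * (c + 1) * L)) with hε
    have hε0 : 0 < ε := lt_min (by positivity) (by positivity)
    refine ⟨ε, hε0, fun m x => m * ((D - μ) / 2) ≤ |(∑ t, d (x t) (best (x t))) - m * μ|,
      weak_law hp (fun a => d a (best a)) ((D - μ) / 2) (by linarith), ?_⟩
    filter_upwards [eventually_ge_atTop ⌈2 / κ⌉₊] with m hm x hx T y hT hdist _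
    have hm' : 2 / κ ≤ m := (Nat.le_ceil _).trans (by exact_mod_cast hm)
    have hm0 : (0 : ℝ) ≤ m := Nat.cast_nonneg m
    push Not at hx
    have hx' := (abs_lt.1 hx).2
    have hcε : c * ε * L ≤ (D - μ) / 2 := by
      have h1 : ε ≤ (D - μ) / (2 * (c + 1) * L) := min_le_right _ _
      rw [le_div_iff₀ (by positivity)] at h1
      nlinarith [mul_pos hε0 hL0']
    obtain ⟨T', hT', hd'⟩ := exists_patch best hbest c hcle hc0 L hL0 ε D x y T hT hdist (by
      nlinarith [mul_le_mul_of_nonneg_left hcε hm0])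
    refine ⟨T', hT'.trans ?_, hd'⟩
    have h1 : ε * m ≤ κ / 4 * m := mul_le_mul_of_nonneg_right (min_le_left _ _) hm0
    have h2 : (m : ℝ) / L ≤ κ / 4 * m := by
      rw [div_le_iff₀ hL0']
      rw [div_le_iff₀ hκ] at hLκ
      nlinarith
    rw [div_le_iff₀ hκ] at hm'
    linarith
  · refine ⟨κ, hκ, fun m x => ∃ t, ¬ 0 < p (x t), ?_, Eventually.of_forall ?_⟩
    · have h0 : ∀ m : ℕ, Pr p (fun x : Fin m → X => ∃ t, ¬ 0 < p (x t)) = 0 := by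
        intro m
        unfold Pr PE
        refine Finset.sum_eq_zero fun x _ => ?_
        beta_reduce
        split_ifs with h
        · obtain ⟨t, ht⟩ := h
          rw [Finset.prod_eq_zero (Finset.mem_univ t) (le_antisymm (not_lt.1 ht) (hp.1 _)),
            zero_mul]
        · rw [mul_zero]
      simp only [h0]
      exact tendsto_const_nhds
    · intro m x hx T y hT _ heq
      push Not at hx
      refine ⟨T, hT, le_of_eq ?_⟩
      have h1 : ∀ t, d (x t) (patch best T x y t) = D := by
        intro t
        by_cases ht : t ∈ T
        · simp [patch, ht, hconst _ (hx t)]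
        · simp [patch, ht, heq hconst t ht, hconst _ (hx t)]
      simp [h1]

/-- If source codes of rate `R'` cover the complement of `U n`, for a rate `R'` smaller than the
rate-distortion function, then this complement has vanishing probability: a strong converse. -/
theorem covered_vanishes [DecidableEq X] [Fintype Y] [Nonempty Y] (hp : IsDist p)
    (hd : ∀ x y, 0 ≤ d x y) (D : ℝ) (hD : 0 ≤ D)
    (best : X → Y) (hbest : ∀ x y, d x (best x) ≤ d x y)
    (hfeas : Tendsto (fun n : ℕ => Pr p (fun x : Fin n → X =>
      n * D < ∑ t, d (x t) (best (x t)))) atTop (nhds 0))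
    (R' R'' : ℝ) (hR' : 0 ≤ R') (hRR : R' < R'') (hRP : ENNReal.ofReal R'' < RP p d D)
    (U : ∀ n : ℕ, (Fin n → X) → Prop) (C : ∀ n : ℕ, Finset (Fin n → Y))
    (hC : ∀ n : ℕ, ((C n).card : ℝ) ≤ (2 : ℝ) ^ (R' * n))
    (hcov : ∀ n x, ¬ U n x → ∃ y ∈ C n, dPow d n x y ≤ n * D) :
    Tendsto (fun n : ℕ => Pr p (fun x : Fin n → X => ¬ U n x)) atTop (nhds 0) := by
  classical
  by_contra hnot
  obtain ⟨δ, hδ, hfreq⟩ : ∃ δ > 0, ∃ᶠ n : ℕ in atTop,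
      δ ≤ Pr p (fun x : Fin n → X => ¬ U n x) := by
    by_contra hcon
    push Not at hcon
    apply hnot
    rw [Metric.tendsto_nhds]
    intro δ hδ
    have := hcon δ hδ
    filter_upwards [this] with n hn
    rw [Real.dist_eq, sub_zero, abs_of_nonneg (Pr_nonneg hp _)]
    exact hn
  set β := (R'' - R') / 2 with hβ
  have hβ0 : 0 < β := by rw [hβ]; linarith
  obtain ⟨κ, hκ, hball⟩ := hamming_ball (Y := Y) β hβ0
  obtain ⟨ε, hε, bad, hbad, hrep⟩ := repair hp hd D best hbest hfeas κ hκ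
  obtain ⟨n, hnδ, hnlarge⟩ := (hfreq.and_eventually
    (eventually_ge_atTop ⌈16 / (ε ^ 2 * δ)⌉₊)).exists
  have hn16 : 16 ≤ ε ^ 2 * δ * n := by
    have : 16 / (ε ^ 2 * δ) ≤ n := (Nat.le_ceil _).trans (by exact_mod_cast hnlarge)
    rw [div_le_iff₀ (by positivity)] at this
    linarith
  set A : Finset (Fin n → X) := Finset.univ.filter (fun x => ¬ U n x ∧ ∀ t, 0 < p (x t)) with hA
  have hPA : δ ≤ Pr p (fun x => x ∈ A) := by
    refine hnδ.trans (Finset.sum_le_sum fun x _ => ?_)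
    by_cases hx : ∀ t, 0 < p (x t)
    · refine le_of_eq ?_
      congr 1
      simp [hA, hx]
    · push Not at hx
      obtain ⟨t, ht⟩ := hx
      rw [Finset.prod_eq_zero (Finset.mem_univ t) (le_antisymm ht (hp.1 _)), zero_mul, zero_mul]
  refine absurd (RP_le_of_codebooks hp D R'' (by linarith) (d := d)
    (fun m => Pr p (bad m) + 16 / ε ^ 2 / m) ?_ ?_) (not_le.2 hRP)
  · simpa using hbad.add (tendsto_const_div_atTop_nhds_zero_nat (16 / ε ^ 2))
  filter_upwards [hrep, eventually_gt_atTop 0, eventually_ge_atTop ⌈2 * n / ε⌉₊,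
    eventually_ge_atTop ⌈1 / β⌉₊] with m hrepm hm0 hmn hmβ
  have hm0' : (0 : ℝ) < m := by exact_mod_cast hm0
  have hmn' : 2 * n / ε ≤ m := (Nat.le_ceil _).trans (by exact_mod_cast hmn)
  have hmβ' : 1 / β ≤ m := (Nat.le_ceil _).trans (by exact_mod_cast hmβ)
  rw [div_le_iff₀ hε] at hmn'
  rw [div_le_iff₀ hβ0] at hmβ'
  have hn0 : 0 < n := by
    rcases Nat.eq_zero_or_pos n with h | h
    · rw [h] at hn16; norm_num at hn16
    · exact h
  set q := m / n with hq
  have hqm : q * n ≤ m := Nat.div_mul_le_self m n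
  have hqm' : (q : ℝ) * n ≤ m := by exact_mod_cast hqm
  let f : Fin q × Fin n → Fin m := fun u => Fin.castLE hqm (finProdFinEquiv u)
  have hf : Function.Injective f := (Fin.castLE_injective hqm).comp finProdFinEquiv.injective
  have hr : (m : ℝ) - q * n ≤ ε / 2 * m := by
    have h1 : m < q * n + n := by
      have := Nat.lt_div_mul_add (a := m) hn0
      simpa [hq] using this
    have h2 : (m : ℝ) < q * n + n := by exact_mod_cast h1
    linarith
  -- concatenations of codewords of the block code, enlarged to Hamming balls
  let base : (Fin q → {y // y ∈ C n}) → Fin m → Y := fun c =>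
    Function.extend f (fun u => (c u.1).1 u.2) (fun _ => Classical.arbitrary Y)
  let K : Finset (Fin m → Y) := Finset.univ.biUnion fun c =>
    Finset.univ.filter (fun y' => (hammingDist (base c) y' : ℝ) ≤ κ * m)
  refine ⟨K, ?_, ?_⟩
  · have h1 : (K.card : ℝ) ≤ ((C n).card : ℝ) ^ q * (2 : ℝ) ^ (β * m) := by
      calc (K.card : ℝ) ≤ ∑ c : Fin q → {y // y ∈ C n},
            ((Finset.univ.filter
              (fun y' => (hammingDist (base c) y' : ℝ) ≤ κ * m)).card : ℝ) := by
            exact_mod_cast Finset.card_biUnion_le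
        _ ≤ ∑ c : Fin q → {y // y ∈ C n}, (2 : ℝ) ^ (β * m) :=
            Finset.sum_le_sum fun c _ => hball m (base c)
        _ = _ := by simp
    have h2 : ((C n).card : ℝ) ^ q ≤ (2 : ℝ) ^ (R' * m) := by
      calc ((C n).card : ℝ) ^ q ≤ ((2 : ℝ) ^ (R' * n)) ^ q :=
            pow_le_pow_left₀ (Nat.cast_nonneg _) (hC n) q
        _ = (2 : ℝ) ^ (R' * (q * n)) := by
            rw [← Real.rpow_natCast, ← Real.rpow_mul (by norm_num)]
            congr 1; ring
        _ ≤ _ := Real.rpow_le_rpow_of_exponent_le (by norm_num)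
            (mul_le_mul_of_nonneg_left hqm' hR')
    have h3 : (K.card : ℝ) ≤ (nMsg R'' m : ℝ) := by
      calc (K.card : ℝ) ≤ (2 : ℝ) ^ (R' * m) * (2 : ℝ) ^ (β * m) :=
            h1.trans (mul_le_mul_of_nonneg_right h2 (by positivity))
        _ = (2 : ℝ) ^ (R' * m + β * m) := (Real.rpow_add (by norm_num) _ _).symm
        _ ≤ (2 : ℝ) ^ ((⌊(m : ℝ) * R''⌋₊ : ℕ) : ℝ) := by
            refine Real.rpow_le_rpow_of_exponent_le (by norm_num) ?_
            have := Nat.lt_floor_add_one ((m : ℝ) * R'')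
            have e : R'' = R' + 2 * β := by rw [hβ]; ring
            have : (m : ℝ) * R'' = R' * m + β * m + m * β := by rw [e]; ring
            linarith
        _ = _ := by rw [Real.rpow_natCast]; simp [nMsg]
    exact_mod_cast h3
  · refine le_trans ?_ (add_le_add le_rfl
      (block_cover hp A δ ε hδ hε hPA hn16 f hf hm0 hr))
    refine le_trans (Pr_mono hp fun x hx => ?_) (Pr_or_le hp _ _)
    by_contra hgood
    push Not at hgood
    obtain ⟨hxb, T, hT, a, haA, hTa⟩ := hgood
    apply hx
    have hac : ∀ b, ∃ y ∈ C n, dPow d n (a b) y ≤ n * D := fun b =>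
      hcov n (a b) ((Finset.mem_filter.1 (haA b)).2).1
    choose c hcC hcd using hac
    let c' : Fin q → {y // y ∈ C n} := fun b => ⟨c b, hcC b⟩
    have hbase : ∀ b s, base c' (f (b, s)) = c b s := fun b s => by
      simp only [base]
      rw [hf.extend_apply]
    have hg1 : ∑ t ∈ Tᶜ, d (x t) (base c' t) ≤ m * D := by
      have hsub : Tᶜ = (Finset.univ.filter (fun u => f u ∈ Tᶜ)).image f := by
        ext t
        simp only [Finset.mem_image, Finset.mem_filter, Finset.mem_univ, true_and]
        constructor
        · intro ht
          obtain ⟨b, s, hbs, _⟩ := hTa t (Finset.mem_compl.1 ht)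
          exact ⟨(b, s), hbs ▸ ht, hbs.symm⟩
        · rintro ⟨u, hu, rfl⟩
          exact hu
      rw [hsub, Finset.sum_image (fun _ _ _ _ h => hf h)]
      calc _ ≤ ∑ u ∈ Finset.univ.filter (fun u => f u ∈ Tᶜ), d (a u.1 u.2) (c u.1 u.2) := by
            refine Finset.sum_le_sum fun u hu => ?_
            obtain ⟨b, s, hbs, hxa⟩ := hTa (f u) (Finset.mem_compl.1 (Finset.mem_filter.1 hu).2)
            obtain rfl := hf hbs
            rw [hxa, hbase]
        _ ≤ ∑ u : Fin q × Fin n, d (a u.1 u.2) (c u.1 u.2) :=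
            Finset.sum_le_univ_sum_of_nonneg fun u => hd _ _
        _ = ∑ b, dPow d n (a b) (c b) := by rw [Fintype.sum_prod_type]; rfl
        _ ≤ ∑ b : Fin q, n * D := Finset.sum_le_sum fun b _ => hcd b
        _ = (q * n) * D := by simp; ring
        _ ≤ m * D := mul_le_mul_of_nonneg_right hqm' hD
    have hg2 : (∀ a, 0 < p a → d a (best a) = D) →
        ∀ t, t ∉ T → d (x t) (base c' t) = d (x t) (best (x t)) := by
      intro hconst t ht
      obtain ⟨b, s, rfl, hxa⟩ := hTa t ht
      rw [hxa, hbase]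
      have hsupp := ((Finset.mem_filter.1 (haA b)).2).2
      have hle : ∀ s ∈ (Finset.univ : Finset (Fin n)),
          d (a b s) (best (a b s)) ≤ d (a b s) (c b s) := fun s _ => hbest _ _
      have htot : ∑ s, d (a b s) (best (a b s)) = ∑ s, d (a b s) (c b s) := by
        refine le_antisymm (Finset.sum_le_sum hle) ((hcd b).trans (le_of_eq ?_))
        simp [hconst _ (hsupp _)]
      exact ((Finset.sum_eq_sum_iff_of_le hle).1 htot s (Finset.mem_univ s)).symm
    obtain ⟨T', hT', hd'⟩ := hrepm x hxb T (base c') hT hg1 hg2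
    refine ⟨patch best T' x (base c'), ?_, hd'⟩
    simp only [K, Finset.mem_biUnion, Finset.mem_univ, true_and, Finset.mem_filter]
    refine ⟨c', le_trans ?_ hT'⟩
    have : hammingDist (base c') (patch best T' x (base c')) ≤ T'.card := by
      refine Finset.card_le_card fun t ht => ?_
      by_contra htT
      exact (Finset.mem_filter.1 ht).2 (by simp [patch, htT])
    exact_mod_cast this

end core

/-! ### Greedy removal of heavy distortion balls -/

section greedy

variable {X Y : Type} [Fintype X] {p : X → ℝ}

/-- Removing distortion balls of remaining mass more than `1 / M` as long as possible takes at most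
`M` steps, and leaves a set `U` that meets each ball in mass at most `1 / M`. -/
lemma greedy [Fintype Y] (hp : IsDist p) (d : X → Y → ℝ) (n : ℕ) (D M : ℝ) (hM : 0 < M) :
    ∃ (U : (Fin n → X) → Prop) (C : Finset (Fin n → Y)), (C.card : ℝ) ≤ M ∧
      (∀ x, ¬ U x → ∃ y ∈ C, dPow d n x y ≤ n * D) ∧
      ∀ y, Pr p (fun x : Fin n → X => U x ∧ dPow d n x y ≤ n * D) ≤ 1 / M := by
  classical
  let cov : Finset (Fin n → Y) → (Fin n → X) → Prop := fun C x => ∃ y ∈ C, dPow d n x y ≤ n * D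
  have hle1 : ∀ Q : (Fin n → X) → Prop, Pr p Q ≤ 1 := fun Q => by
    have h1 := Pr_not hp Q
    have h2 := Pr_nonneg hp (fun x => ¬ Q x)
    linarith
  let S : Finset (Finset (Fin n → Y)) :=
    Finset.univ.filter (fun C => (C.card : ℝ) ≤ M * Pr p (cov C))
  have hS : S.Nonempty := ⟨∅, by
    simp only [S, Finset.mem_filter, Finset.mem_univ, true_and, Finset.card_empty, Nat.cast_zero]
    exact mul_nonneg hM.le (Pr_nonneg hp _)⟩
  obtain ⟨C, hCS, hmax⟩ := Finset.exists_max_image S Finset.card hS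
  have hC : (C.card : ℝ) ≤ M * Pr p (cov C) := (Finset.mem_filter.1 hCS).2
  refine ⟨fun x => ¬ cov C x, C, ?_, fun x hx => not_not.1 hx, fun y => ?_⟩
  · exact hC.trans (by nlinarith [hle1 (cov C)])
  · by_contra hcon
    push Not at hcon
    rw [div_lt_iff₀ hM] at hcon
    have hy : y ∉ C := by
      intro hy
      have h0 : Pr p (fun x : Fin n → X => ¬ cov C x ∧ dPow d n x y ≤ n * D) ≤
          Pr p (fun _ : Fin n → X => False) := Pr_mono hp fun x hx => hx.1 ⟨y, hy, hx.2⟩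
      have h1 : Pr p (fun _ : Fin n → X => False) = 0 := by simp [Pr, PE]
      nlinarith
    have hsplit : Pr p (cov C) + Pr p (fun x : Fin n → X => ¬ cov C x ∧ dPow d n x y ≤ n * D) =
        Pr p (cov (insert y C)) := by
      unfold Pr
      rw [← PE_add]
      congr 1
      funext x
      have hiff : cov (insert y C) x ↔ dPow d n x y ≤ n * D ∨ cov C x := by simp [cov]
      by_cases h1 : cov C x <;> by_cases h2 : dPow d n x y ≤ n * D <;> simp [hiff, h1, h2]
    have hmem : insert y C ∈ S := by
      simp only [S, Finset.mem_filter, Finset.mem_univ, true_and]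
      rw [Finset.card_insert_of_notMem hy, ← hsplit]
      push_cast
      linarith
    have := hmax _ hmem
    rw [Finset.card_insert_of_notMem hy] at this
    omega

end greedy

/-! ### Random codebooks on top of a source modem -/

/-- Images of probability distributions on finite types. -/
lemma exists_pushforward {A B : Type} [Fintype A] [Fintype B] (q : A → ℝ) (hq : IsDist q)
    (Φ : A → B) :
    ∃ q' : B → ℝ, IsDist q' ∧ ∀ F : B → ℝ, ∑ b, q' b * F b = ∑ a, q a * F (Φ a) := by
  classical
  have key : ∀ F : B → ℝ, ∑ b, (∑ a, q a * (if Φ a = b then 1 else 0)) * F b =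
      ∑ a, q a * F (Φ a) := by
    intro F
    simp only [Finset.sum_mul]
    rw [Finset.sum_comm]
    refine Finset.sum_congr rfl fun a _ => ?_
    simp
  refine ⟨fun b => ∑ a, q a * (if Φ a = b then 1 else 0), ⟨fun b => ?_, ?_⟩, key⟩
  · refine Finset.sum_nonneg fun a _ => mul_nonneg (hq.1 a) ?_
    split_ifs <;> norm_num
  · have := key (fun _ => 1)
    simp only [mul_one] at this
    exact this.trans hq.2

/-- A decoder choosing the only codeword that passes the test `Q`, and declaring an error if there
is no such codeword or more than one. -/
def uniqueDec {K : ℕ} {A : Type} (c : Fin K → A) (Q : A → Prop) : Option (Fin K) :=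
  open Classical in if h : ∃ k, Q (c k) ∧ ∀ k', k' ≠ k → ¬ Q (c k') then some h.choose else none

lemma uniqueDec_eq {K : ℕ} {A : Type} (c : Fin K → A) (Q : A → Prop) (k : Fin K)
    (hk : Q (c k)) (hu : ∀ k', k' ≠ k → ¬ Q (c k')) : uniqueDec c Q = some k := by
  have h : ∃ k, Q (c k) ∧ ∀ k', k' ≠ k → ¬ Q (c k') := ⟨k, hk, hu⟩
  rw [uniqueDec, dif_pos h]
  congr 1
  by_contra hne
  exact hu _ hne h.choose_spec.1

/-- The law of a family of codebooks, indexed by the pairs of users, with independent codewords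
drawn from the source distributions. -/
def codebookLaw (pS : ∀ i j, 𝒳 i j → ℝ) (n : ℕ) (K : Fin N → Fin N → ℕ)
    (c : ∀ i j, Fin (K i j) → Fin n → 𝒳 i j) : ℝ :=
  ∏ i, ∏ j, ∏ k, iidP (pS i j) n (c i j k)

section codebook

set_option linter.unusedSectionVars false

variable {pS : ∀ i j, 𝒳 i j → ℝ} {n : ℕ} {K : Fin N → Fin N → ℕ}

lemma isDist_iid (hpS : ∀ i j, IsDist (pS i j)) (i j : Fin N) : IsDist (iidP (pS i j) n) :=
  isDist_prod (w := fun _ : Fin n => pS i j) fun _ => hpS i j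

lemma isDist_codebook (hpS : ∀ i j, IsDist (pS i j)) : IsDist (codebookLaw pS n K) :=
  isDist_prod (w := fun i (ci : ∀ j, Fin (K i j) → Fin n → 𝒳 i j) =>
      ∏ j, ∏ k, iidP (pS i j) n (ci j k)) fun i =>
    isDist_prod (w := fun j (cij : Fin (K i j) → Fin n → 𝒳 i j) =>
      ∏ k, iidP (pS i j) n (cij k)) fun j =>
    isDist_prod (w := fun _ : Fin (K i j) => iidP (pS i j) n) fun _ => isDist_iid hpS i j

/-- The codewords assigned to a fixed tuple of messages are distributed as the sources. -/
lemma codebook_select (hpS : ∀ i j, IsDist (pS i j)) (msg : ∀ i j, Fin (K i j))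
    (F : (∀ i j, Fin n → 𝒳 i j) → ℝ) :
    ∑ c, codebookLaw pS n K c * F (fun i j => c i j (msg i j)) =
      ∑ x : ∀ i j, Fin n → 𝒳 i j, (∏ i, ∏ j, iidP (pS i j) n (x i j)) * F x := by
  refine push_prod (w := fun i (xi : ∀ j, Fin n → 𝒳 i j) => ∏ j, iidP (pS i j) n (xi j))
    (fun i (ci : ∀ j, Fin (K i j) → Fin n → 𝒳 i j) => ∏ j, ∏ k, iidP (pS i j) n (ci j k))
    (fun i ci j => ci j (msg i j)) (fun i G => ?_) F
  refine push_prod (w := fun j => iidP (pS i j) n)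
    (fun j (cij : Fin (K i j) → Fin n → 𝒳 i j) => ∏ k, iidP (pS i j) n (cij k))
    (fun j cij => cij (msg i j)) (fun j H => ?_) G
  exact PE_eval (w := fun _ : Fin (K i j) => iidP (pS i j) n) (fun _ => isDist_iid hpS i j)
    (msg i j) H

lemma source_marginal (hpS : ∀ i j, IsDist (pS i j)) (i j : Fin N) (F : (Fin n → 𝒳 i j) → ℝ) :
    ∑ x : ∀ i j, Fin n → 𝒳 i j, (∏ i, ∏ j, iidP (pS i j) n (x i j)) * F (x i j) =
      ∑ v, iidP (pS i j) n v * F v := by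
  refine (PE_eval (w := fun i (xi : ∀ j, Fin n → 𝒳 i j) => ∏ j, iidP (pS i j) n (xi j))
    (fun i => isDist_prod fun j => isDist_iid hpS i j) i (fun xi => F (xi j))).trans ?_
  exact PE_eval (w := fun j => iidP (pS i j) n) (fun j => isDist_iid hpS i j) j F

/-- A bound that holds on average over one codeword, all others being fixed, holds on average over
the codebooks. -/
lemma codebook_resample (hpS : ∀ i j, IsDist (pS i j)) (i j : Fin N) (k : Fin (K i j))
    (G : (∀ i j, Fin (K i j) → Fin n → 𝒳 i j) → ℝ) (b : ℝ)
    (h : ∀ c ci cij, ∑ v, iidP (pS i j) n v *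
      G (Function.update c i (Function.update ci j (Function.update cij k v))) ≤ b) :
    ∑ c, codebookLaw pS n K c * G c ≤ b := by
  have h1 : ∀ i j, IsDist (fun cij : Fin (K i j) → Fin n → 𝒳 i j =>
      ∏ k, iidP (pS i j) n (cij k)) := fun i j =>
    isDist_prod (w := fun _ : Fin (K i j) => iidP (pS i j) n) fun _ => isDist_iid hpS i j
  refine PE_le_of_resample (w := fun i (ci : ∀ j, Fin (K i j) → Fin n → 𝒳 i j) =>
    ∏ j, ∏ k, iidP (pS i j) n (ci j k)) (fun i => isDist_prod (h1 i)) i G b fun c => ?_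
  refine PE_le_of_resample (w := fun j (cij : Fin (K i j) → Fin n → 𝒳 i j) =>
    ∏ k, iidP (pS i j) n (cij k)) (h1 i) j (fun ci => G (Function.update c i ci)) b fun ci => ?_
  exact PE_le_of_resample (w := fun _ : Fin (K i j) => iidP (pS i j) n)
    (fun _ => isDist_iid hpS i j) k
    (fun cij => G (Function.update c i (Function.update ci j cij))) b fun cij => h c ci cij

end codebook
/-- Random coding on top of a source modem. User `i` feeds the source modem with the codewords of
its messages; user `j` decodes to the only codeword in `U` that is within distortion `D` of the
reproduction. An error requires the true codeword to be outside `U`, excess distortion, or a false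
codeword to pass the test; false codewords are independent of the reproduction. -/
lemma random_code (pS : ∀ i j, 𝒳 i j → ℝ) (hpS : ∀ i j, IsDist (pS i j))
    (dd : ∀ i j, 𝒳 i j → 𝒴 i j → ℝ) (D : Fin N → Fin N → ℝ) (n : ℕ)
    (ρ : RandModem N ℐ 𝒪 𝒳 𝒴 n) (R : Fin N → Fin N → ℝ)
    (U : ∀ i j, (Fin n → 𝒳 i j) → Prop) (b : Fin N → Fin N → ℝ) (hb0 : ∀ i j, 0 ≤ b i j)
    (hb : ∀ i j y, Pr (pS i j) (fun x : Fin n → 𝒳 i j =>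
      U i j x ∧ dPow (dd i j) n x y ≤ n * D i j) ≤ b i j) :
    ∃ σ : RandMsgModem N ℐ 𝒪 R n, ∀ (med : Medium N ℐ 𝒪) (msg : ∀ i j, Fin (nMsg (R i j) n))
      (i j : Fin N), muErr R n σ med msg i j ≤
        Pr (pS i j) (fun x : Fin n → 𝒳 i j => ¬ U i j x) + muExcess pS dd D n ρ med i j
          + nMsg (R i j) n * b i j := by
  classical
  let K : Fin N → Fin N → ℕ := fun i j => nMsg (R i j) n
  let W := codebookLaw pS n K
  have hW : IsDist W := isDist_codebook hpS
  let Q : ∀ i j, (Fin n → 𝒴 i j) → (Fin n → 𝒳 i j) → Prop := fun i j y x =>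
    U i j x ∧ dPow (dd i j) n x y ≤ n * D i j
  let Φ : (((∀ i, (∀ j, Fin n → 𝒳 i j) → Fin n → ℐ i) ×
       (∀ i, (Fin n → 𝒪 i) → ∀ j, Fin n → 𝒴 j i)) × (∀ i j, Fin (K i j) → Fin n → 𝒳 i j)) →
      ((∀ i, (∀ j, Fin (nMsg (R i j) n)) → Fin n → ℐ i) ×
       (∀ i, (Fin n → 𝒪 i) → ∀ j, Option (Fin (nMsg (R j i) n)))) := fun q =>
    (fun i ms => q.1.1 i (fun j => q.2 i j (ms j)),
     fun j o i => uniqueDec (q.2 i j) (Q i j (q.1.2 j o i)))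
  have hdist : IsDist (fun q : ((∀ i, (∀ j, Fin n → 𝒳 i j) → Fin n → ℐ i) ×
       (∀ i, (Fin n → 𝒪 i) → ∀ j, Fin n → 𝒴 j i)) × (∀ i j, Fin (K i j) → Fin n → 𝒳 i j) =>
      ρ.p q.1 * W q.2) := by
    refine ⟨fun q => mul_nonneg (ρ.isDist.1 _) (hW.1 _), ?_⟩
    rw [Fintype.sum_prod_type]
    simp only [← Finset.mul_sum, hW.2, mul_one]
    exact ρ.isDist.2
  obtain ⟨s, hs, hsF⟩ := exists_pushforward _ hdist Φ
  refine ⟨⟨s, hs⟩, fun med msg i j => ?_⟩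
  have h1 : muErr R n ⟨s, hs⟩ med msg i j = ∑ ef, ρ.p ef * ∑ c, W c *
      ∑ o, med.m n (fun i' => ef.1 i' (fun j' => c i' j' (msg i' j'))) o *
        (if uniqueDec (c i j) (Q i j (ef.2 j (o j) i)) = some (msg i j) then 0 else 1) := by
    unfold muErr
    simp only
    rw [hsF, Fintype.sum_prod_type]
    refine Finset.sum_congr rfl fun ef _ => ?_
    rw [Finset.mul_sum]
    refine Finset.sum_congr rfl fun c _ => ?_
    rw [mul_assoc]
  rw [h1]
  -- it suffices to bound the error for each realization of the source modem
  have h2 : ∀ ef : (∀ i, (∀ j, Fin n → 𝒳 i j) → Fin n → ℐ i) ×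
       (∀ i, (Fin n → 𝒪 i) → ∀ j, Fin n → 𝒴 j i), ∑ c, W c *
      ∑ o, med.m n (fun i' => ef.1 i' (fun j' => c i' j' (msg i' j'))) o *
        (if uniqueDec (c i j) (Q i j (ef.2 j (o j) i)) = some (msg i j) then 0 else 1) ≤
      Pr (pS i j) (fun x : Fin n → 𝒳 i j => ¬ U i j x) +
      ∑ x : ∀ i' j', Fin n → 𝒳 i' j', (∏ i', ∏ j', ∏ t, pS i' j' (x i' j' t)) *
      ∑ o : ∀ i', Fin n → 𝒪 i', med.m n (fun i' => ef.1 i' (x i')) o *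
        (if (n : ℝ) * D i j < ∑ t, dd i j (x i j t) (ef.2 j (o j) i t) then 1 else 0)
      + nMsg (R i j) n * b i j := by
    intro ef
    let A : (∀ i j, Fin n → 𝒳 i j) → ℝ := fun x => ∑ o, med.m n (fun i' => ef.1 i' (x i')) o *
        (if (n : ℝ) * D i j < ∑ t, dd i j (x i j t) (ef.2 j (o j) i t) then 1 else 0)
    let G : Fin (K i j) → (∀ i j, Fin (K i j) → Fin n → 𝒳 i j) → ℝ := fun k c =>
      ∑ o, med.m n (fun i' => ef.1 i' (fun j' => c i' j' (msg i' j'))) o *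
        (if Q i j (ef.2 j (o j) i) (c i j k) then 1 else 0)
    have hpoint : ∀ c : ∀ i j, Fin (K i j) → Fin n → 𝒳 i j,
        ∑ o, med.m n (fun i' => ef.1 i' (fun j' => c i' j' (msg i' j'))) o *
          (if uniqueDec (c i j) (Q i j (ef.2 j (o j) i)) = some (msg i j) then 0 else 1) ≤
        (if ¬ U i j (c i j (msg i j)) then 1 else 0) + A (fun i j => c i j (msg i j)) +
          ∑ k ∈ Finset.univ.erase (msg i j), G k c := by
      intro c
      set ι := (fun i' => ef.1 i' (fun j' => c i' j' (msg i' j'))) with hι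
      have hm := med.isMed n ι
      have e1 : (if ¬ U i j (c i j (msg i j)) then (1 : ℝ) else 0) =
          ∑ o, med.m n ι o * (if ¬ U i j (c i j (msg i j)) then 1 else 0) := by
        rw [← Finset.sum_mul, hm.2, one_mul]
      have e3 : ∑ k ∈ Finset.univ.erase (msg i j), G k c = ∑ o, med.m n ι o *
          ∑ k ∈ Finset.univ.erase (msg i j),
            (if Q i j (ef.2 j (o j) i) (c i j k) then 1 else 0) := by
        simp only [G, Finset.mul_sum]
        rw [Finset.sum_comm]
      rw [e1, e3, ← Finset.sum_add_distrib, ← Finset.sum_add_distrib]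
      refine Finset.sum_le_sum fun o _ => ?_
      rw [← mul_add, ← mul_add]
      refine mul_le_mul_of_nonneg_left ?_ (hm.1 o)
      have n3 : 0 ≤ ∑ k ∈ Finset.univ.erase (msg i j),
          (if Q i j (ef.2 j (o j) i) (c i j k) then (1 : ℝ) else 0) :=
        Finset.sum_nonneg fun k _ => by split_ifs <;> norm_num
      have n2 : (0 : ℝ) ≤ if (n : ℝ) * D i j <
          ∑ t, dd i j (c i j (msg i j) t) (ef.2 j (o j) i t) then 1 else 0 := by
        split_ifs <;> norm_num
      have n1 : (0 : ℝ) ≤ if ¬ U i j (c i j (msg i j)) then 1 else 0 := by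
        split_ifs <;> norm_num
      by_cases hU : U i j (c i j (msg i j))
      swap
      · have : (if uniqueDec (c i j) (Q i j (ef.2 j (o j) i)) = some (msg i j)
            then (0 : ℝ) else 1) ≤ 1 := by split_ifs <;> norm_num
        rw [if_pos hU]
        linarith
      by_cases hE : (n : ℝ) * D i j < ∑ t, dd i j (c i j (msg i j) t) (ef.2 j (o j) i t)
      · have : (if uniqueDec (c i j) (Q i j (ef.2 j (o j) i)) = some (msg i j)
            then (0 : ℝ) else 1) ≤ 1 := by split_ifs <;> norm_num
        rw [if_pos hE]
        linarith
      by_cases hk : ∃ k, k ≠ msg i j ∧ Q i j (ef.2 j (o j) i) (c i j k)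
      · obtain ⟨k, hk, hQ⟩ := hk
        have h3 := Finset.single_le_sum (f := fun k =>
          (if Q i j (ef.2 j (o j) i) (c i j k) then (1 : ℝ) else 0))
          (fun k _ => by split_ifs <;> norm_num)
          (Finset.mem_erase.2 ⟨hk, Finset.mem_univ k⟩)
        simp only [if_pos hQ] at h3
        have : (if uniqueDec (c i j) (Q i j (ef.2 j (o j) i)) = some (msg i j)
            then (0 : ℝ) else 1) ≤ 1 := by split_ifs <;> norm_num
        linarith
      · push Not at hk
        rw [if_pos (uniqueDec_eq (c i j) _ (msg i j) ⟨hU, not_lt.1 hE⟩ hk)]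
        linarith
    have hG : ∀ k ∈ Finset.univ.erase (msg i j), ∑ c, W c * G k c ≤ b i j := by
      intro k hk
      have hkne : k ≠ msg i j := (Finset.mem_erase.1 hk).1
      refine codebook_resample hpS i j k (G k) (b i j) fun c ci cij => ?_
      let x₀ : ∀ i j, Fin n → 𝒳 i j := fun i' j' =>
        Function.update c i (Function.update ci j cij) i' j' (msg i' j')
      have hx₀ : ∀ v i' j', Function.update c i (Function.update ci j (Function.update cij k v))
          i' j' (msg i' j') = x₀ i' j' := by
        intro v i' j'
        simp only [x₀]
        by_cases hi : i' = i
        · subst hi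
          by_cases hj : j' = j
          · subst hj
            simp [Function.update_of_ne hkne.symm]
          · simp [Function.update_of_ne hj]
        · simp [Function.update_of_ne hi]
      have hm := med.isMed n (fun i' => ef.1 i' (x₀ i'))
      calc _ = ∑ v, iidP (pS i j) n v * ∑ o, med.m n (fun i' => ef.1 i' (x₀ i')) o *
            (if Q i j (ef.2 j (o j) i) v then 1 else 0) := by
            refine Finset.sum_congr rfl fun v _ => ?_
            simp only [G, hx₀, Function.update_self]
        _ = ∑ o, med.m n (fun i' => ef.1 i' (x₀ i')) o *
            Pr (pS i j) (fun x => Q i j (ef.2 j (o j) i) x) := by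
            simp only [Finset.mul_sum, Pr, PE]
            rw [Finset.sum_comm]
            refine Finset.sum_congr rfl fun o _ => Finset.sum_congr rfl fun v _ => ?_
            rw [iidP]
            ring_nf
        _ ≤ ∑ o, med.m n (fun i' => ef.1 i' (x₀ i')) o * b i j :=
            Finset.sum_le_sum fun o _ => mul_le_mul_of_nonneg_left (hb i j _) (hm.1 o)
        _ = b i j := by rw [← Finset.sum_mul, hm.2, one_mul]
    calc _ ≤ ∑ c, W c * ((if ¬ U i j (c i j (msg i j)) then 1 else 0) +
            A (fun i j => c i j (msg i j)) + ∑ k ∈ Finset.univ.erase (msg i j), G k c) :=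
          Finset.sum_le_sum fun c _ => mul_le_mul_of_nonneg_left (hpoint c) (hW.1 c)
      _ = ∑ c, W c * (if ¬ U i j (c i j (msg i j)) then 1 else 0) +
            ∑ c, W c * A (fun i j => c i j (msg i j)) +
            ∑ k ∈ Finset.univ.erase (msg i j), ∑ c, W c * G k c := by
          rw [Finset.sum_comm (s := Finset.univ.erase (msg i j))]
          simp only [mul_add, Finset.sum_add_distrib, Finset.mul_sum]
      _ ≤ _ := by
          refine add_le_add (add_le_add (le_of_eq ?_) (le_of_eq ?_)) ?_
          · rw [codebook_select hpS msg (fun x => if ¬ U i j (x i j) then 1 else 0),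
              source_marginal hpS i j (fun v => if ¬ U i j v then 1 else 0)]
            unfold Pr PE iidP
            refine Finset.sum_congr rfl fun v _ => ?_
            congr
          · exact codebook_select hpS msg A
          · refine (Finset.sum_le_sum hG).trans ?_
            rw [Finset.sum_const, nsmul_eq_mul]
            refine mul_le_mul_of_nonneg_right ?_ (hb0 i j)
            have : (Finset.univ.erase (msg i j)).card ≤ nMsg (R i j) n :=
              (Finset.card_le_univ _).trans (by simp)
            exact_mod_cast this
  refine (Finset.sum_le_sum fun ef _ =>
    mul_le_mul_of_nonneg_left (h2 ef) (ρ.isDist.1 ef)).trans (le_of_eq ?_)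
  simp only [mul_add, Finset.sum_add_distrib]
  rw [← Finset.sum_mul, ← Finset.sum_mul, ρ.isDist.2, one_mul, one_mul]
  rfl

/-- The excess-distortion probability of any modem is at least that of the letterwise best
reproduction. -/
lemma feas_le_muExcess (pS : ∀ i j, 𝒳 i j → ℝ) (hpS : ∀ i j, IsDist (pS i j))
    (dd : ∀ i j, 𝒳 i j → 𝒴 i j → ℝ) (D : Fin N → Fin N → ℝ) (n : ℕ)
    (ρ : RandModem N ℐ 𝒪 𝒳 𝒴 n) (med : Medium N ℐ 𝒪) (i j : Fin N)
    (best : 𝒳 i j → 𝒴 i j) (hbest : ∀ x y, dd i j x (best x) ≤ dd i j x y) :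
    Pr (pS i j) (fun x : Fin n → 𝒳 i j => n * D i j < ∑ t, dd i j (x t) (best (x t))) ≤
      muExcess pS dd D n ρ med i j := by
  classical
  set P := Pr (pS i j) (fun x : Fin n → 𝒳 i j =>
    n * D i j < ∑ t, dd i j (x t) (best (x t))) with hP
  have h1 : P = ∑ ef, ρ.p ef * P := by rw [← Finset.sum_mul, ρ.isDist.2, one_mul]
  rw [h1]
  refine Finset.sum_le_sum fun ef _ => mul_le_mul_of_nonneg_left ?_ (ρ.isDist.1 ef)
  have h2 : P = ∑ x : ∀ i j, Fin n → 𝒳 i j, (∏ i, ∏ j, iidP (pS i j) n (x i j)) *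
      (if n * D i j < ∑ t, dd i j (x i j t) (best (x i j t)) then 1 else 0) := by
    rw [source_marginal hpS i j (fun v =>
      if n * D i j < ∑ t, dd i j (v t) (best (v t)) then 1 else 0), hP]
    unfold Pr PE iidP
    refine Finset.sum_congr rfl fun v _ => ?_
    congr
  rw [h2]
  refine Finset.sum_le_sum fun x _ => mul_le_mul_of_nonneg_left ?_
    (Finset.prod_nonneg fun i' _ => Finset.prod_nonneg fun j' _ => (isDist_iid hpS i' j').1 _)
  have hm := med.isMed n (fun i' => ef.1 i' (x i'))
  by_cases hx : n * D i j < ∑ t, dd i j (x i j t) (best (x i j t))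
  · rw [if_pos hx]
    refine hm.2.ge.trans (Finset.sum_le_sum fun o _ => ?_)
    rw [if_pos (hx.trans_le (Finset.sum_le_sum fun t _ => hbest _ _)), mul_one]
  · rw [if_neg hx]
    refine Finset.sum_nonneg fun o _ => mul_nonneg (hm.1 o) ?_
    split_ifs <;> norm_num

/-- Random codes permitted. If the compound medium `ℬ` is capable of
communicating the mutually independent i.i.d. sources `X_{ij}` from user `i` to user `j` to
within distortions `D i j` under additive distortion functions `dd i j`, then any rates
`0 < R i j < R^P_{X_{ij}}(D_{ij})` are simultaneously reliably achievable over every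
`m ∈ ℬ` with random codes. -/
theorem stmt2 (pS : ∀ i j, 𝒳 i j → ℝ) (hpS : ∀ i j, IsDist (pS i j))
    (dd : ∀ i j, 𝒳 i j → 𝒴 i j → ℝ) (hdd : ∀ i j x y, 0 ≤ dd i j x y)
    (D : Fin N → Fin N → ℝ) (hD : ∀ i j, 0 ≤ D i j)
    (ℬ : Set (Medium N ℐ 𝒪))
    (hcap : MUCanCommunicate ℬ pS dd D)
    (R : Fin N → Fin N → ℝ) (hR0 : ∀ i j, 0 < R i j)
    (hR : ∀ i j, ENNReal.ofReal (R i j) < RP (pS i j) (dd i j) (D i j)) :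
    MUReliablyAchievable ℬ R := by
  classical
  obtain ⟨ρ, ω, hω, hρ⟩ := hcap
  rcases ℬ.eq_empty_or_nonempty with rfl | ⟨med₀, hmed₀⟩
  · choose σ _ using fun n => random_code pS hpS dd D n (ρ n) R (fun _ _ _ => False)
      (fun _ _ => 0) (fun _ _ => le_rfl) (fun i j y => by simp [Pr, PE])
    exact ⟨σ, fun _ => 0, tendsto_const_nhds, fun n med hmed => absurd hmed (Set.notMem_empty _)⟩
  -- the reproduction alphabets are nonempty, since the modems are defined on medium outputs
  have hY : ∀ i j, Nonempty (𝒴 i j) := by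
    intro i j
    have hne : ∀ {α : Type} [Fintype α] {q : α → ℝ}, IsDist q → Nonempty α := by
      intro α _ q hq
      by_contra hcon
      rw [not_nonempty_iff] at hcon
      have := hq.2
      simp at this
    obtain ⟨ef⟩ := hne (ρ 1).isDist
    have hX : ∀ i' j', Nonempty (𝒳 i' j') := fun i' j' => hne (hpS i' j')
    let x : ∀ i' j', 𝒳 i' j' := fun i' j' => (hX i' j').some
    obtain ⟨o⟩ := hne (med₀.isMed 1 (fun i' => ef.1 i' (fun j' _ => x i' j')))
    exact ⟨ef.2 j (o j) i 0⟩
  have hbest : ∀ i j, ∃ best : 𝒳 i j → 𝒴 i j, ∀ x y, dd i j x (best x) ≤ dd i j x y := by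
    intro i j
    have := hY i j
    choose best hbest using fun x => Finite.exists_min (dd i j x)
    exact ⟨best, hbest⟩
  choose best hbest using hbest
  have hfeas : ∀ i j, Tendsto (fun n : ℕ => Pr (pS i j) (fun x : Fin n → 𝒳 i j =>
      n * D i j < ∑ t, dd i j (x t) (best i j (x t)))) atTop (nhds 0) := fun i j =>
    squeeze_zero (fun n => Pr_nonneg (hpS i j) _)
      (fun n => (feas_le_muExcess pS hpS dd D n (ρ n) med₀ i j (best i j) (hbest i j)).trans
        (hρ n med₀ hmed₀ i j)) (hω i j)
  have hrates : ∀ i j, ∃ R'' : ℝ, R i j < R'' ∧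
      ENNReal.ofReal R'' < RP (pS i j) (dd i j) (D i j) := by
    intro i j
    obtain ⟨r, _, h1, h2⟩ := ENNReal.lt_iff_exists_real_btwn.1 (hR i j)
    exact ⟨r, (ENNReal.ofReal_lt_ofReal_iff_of_nonneg (hR0 i j).le).1 h1, h2⟩
  choose R'' hRR'' hR'' using hrates
  let R' : Fin N → Fin N → ℝ := fun i j => (R i j + R'' i j) / 2
  have hRR' : ∀ i j, R i j < R' i j := fun i j => by simp only [R']; linarith [hRR'' i j]
  have hR'R'' : ∀ i j, R' i j < R'' i j := fun i j => by simp only [R']; linarith [hRR'' i j]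
  choose U C hC hcov hU using fun (i j : Fin N) (n : ℕ) =>
    greedy (hpS i j) (dd i j) n (D i j) ((2 : ℝ) ^ (R' i j * n)) (by positivity)
  have hvan : ∀ i j, Tendsto (fun n : ℕ => Pr (pS i j) (fun x : Fin n → 𝒳 i j => ¬ U i j n x))
      atTop (nhds 0) := fun i j => by
    have := hY i j
    exact covered_vanishes (hpS i j) (hdd i j) (D i j) (hD i j) (best i j) (hbest i j)
      (hfeas i j) (R' i j) (R'' i j) ((hR0 i j).trans (hRR' i j)).le (hR'R'' i j) (hR'' i j)
      (U i j) (C i j) (hC i j) (hcov i j)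
  choose σ hσ using fun n => random_code pS hpS dd D n (ρ n) R (fun i j => U i j n)
    (fun i j => 1 / (2 : ℝ) ^ (R' i j * n)) (fun i j => by positivity) (fun i j y => hU i j n y)
  let ε : Fin N → Fin N → ℕ → ℝ := fun i j n =>
    Pr (pS i j) (fun x : Fin n → 𝒳 i j => ¬ U i j n x) + |ω i j n| +
      ((2 : ℝ) ^ (-(R' i j - R i j))) ^ n
  have hε0 : ∀ i j n, 0 ≤ ε i j n := fun i j n =>
    add_nonneg (add_nonneg (Pr_nonneg (hpS i j) _) (abs_nonneg _)) (by positivity)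
  have hε : ∀ i j, Tendsto (ε i j) atTop (nhds 0) := by
    intro i j
    have h3 : Tendsto (fun n : ℕ => ((2 : ℝ) ^ (-(R' i j - R i j))) ^ n) atTop (nhds 0) :=
      tendsto_pow_atTop_nhds_zero_of_lt_one (by positivity)
        (Real.rpow_lt_one_of_one_lt_of_neg (by norm_num) (by linarith [hRR' i j]))
    have h := ((hvan i j).add (hω i j).abs).add h3
    rw [abs_zero, add_zero, add_zero] at h
    exact h
  refine ⟨σ, fun n => ∑ i, ∑ j, ε i j n, ?_, fun n med hmed msg i j => ?_⟩
  · simpa using tendsto_finsetSum Finset.univ fun i _ =>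
      tendsto_finsetSum Finset.univ fun j _ => hε i j
  · have hexp : (nMsg (R i j) n : ℝ) * (1 / (2 : ℝ) ^ (R' i j * n)) ≤
        ((2 : ℝ) ^ (-(R' i j - R i j))) ^ n := by
      have h1 : (nMsg (R i j) n : ℝ) ≤ (2 : ℝ) ^ (R i j * n) := by
        rw [nMsg]
        push_cast
        rw [← Real.rpow_natCast]
        refine Real.rpow_le_rpow_of_exponent_le (by norm_num) ?_
        rw [mul_comm (R i j)]
        exact Nat.floor_le (mul_nonneg (Nat.cast_nonneg n) (hR0 i j).le)
      refine (mul_le_mul_of_nonneg_right h1 (by positivity)).trans (le_of_eq ?_)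
      rw [one_div, ← Real.rpow_neg (by norm_num), ← Real.rpow_add (by norm_num),
        ← Real.rpow_natCast, ← Real.rpow_mul (by norm_num)]
      congr 1
      ring
    have hle : muErr R n (σ n) med msg i j ≤ ε i j n :=
      (hσ n med msg i j).trans (add_le_add
        (add_le_add le_rfl ((hρ n med hmed i j).trans (le_abs_self _))) hexp)
    refine hle.trans ?_
    refine (Finset.single_le_sum (f := fun j => ε i j n) (fun j _ => hε0 i j n)
      (Finset.mem_univ j)).trans ?_
    exact Finset.single_le_sum (f := fun i => ∑ j, ε i j n)
      (fun i _ => Finset.sum_nonneg fun j _ => hε0 i j n) (Finset.mem_univ i)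

end
end

section
/- Assume random codes are permitted. If there exist rates R_ij with R_ij > R^P_{X_ij}(D_ij) for all 1 ≤ i,j ≤ N such that reliable communication at rate R_ij from user i to user j, simultaneously for all pairs (i,j), is achievable over every m ∈ ℬ with random codes, then the mutually independent i.i.d. X_ij sources can be communicated from user i to user j to within distortion levels D_ij over the compound medium ℬ by a separation architecture, in which each user's modem is the composition of per-pair source encoders/decoders with the medium modems achieving the reliable rates. -/
/-!
The separation architecture fails for the pair `(i, j)` only if the message of `(i, j)` is decoded
incorrectly, or if it is decoded correctly and the source code itself exceeds the distortion level.
By the union bound the excess-distortion probability is at most `δ n` plus the excess probability of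
the source code of the pair `(i, j)`, and both tend to `0` uniformly over the compound medium
(`muSepExcess_le`). The first bound is the *maximal* error probability averaged over the messages
that the source encoders produce; the second uses that all other source codes, all other sources and
the medium integrate to one, which is the marginalization identity `sum_prod_marginal₂`.

The source codes come from the definition of `RP` as an infimum: some rate `R' < R i j` admits good
codes, and a code of rate `R'` becomes a code of rate `R i j` with the same excess probability by
embedding the smaller message set into the larger one (`exists_srcCode_of_le`).
-/

open Finset Filter
open scoped ENNReal

noncomputable section

variable {N : ℕ} {ℐ 𝒪 : Fin N → Type} {𝒳 𝒴 : Fin N → Fin N → Type}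
  [∀ i, Fintype (ℐ i)] [∀ i, Fintype (𝒪 i)] [∀ i, DecidableEq (𝒪 i)]
  [∀ i j, Fintype (𝒳 i j)] [∀ i j, DecidableEq (𝒳 i j)] [∀ i j, Fintype (𝒴 i j)]

/-- Probability of excess distortion of the pair `(i,j)` in the separation architecture:
each user's modem is the composition of per-pair random source codes `τ i' j'` with the
message-modem scheme `σ` (with `yerr i' j'` the reproduction emitted upon the error symbol),
over the medium `med`, at block length `n`. -/
def muSepExcess (pS : ∀ i j, 𝒳 i j → ℝ) (dd : ∀ i j, 𝒳 i j → 𝒴 i j → ℝ)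
    (D : Fin N → Fin N → ℝ) (R : Fin N → Fin N → ℝ) (n : ℕ)
    (τ : ∀ i j, RandCode (Fin n → 𝒳 i j) (Fin (nMsg (R i j) n))
      (Fin (nMsg (R i j) n)) (Fin n → 𝒴 i j))
    (σ : RandMsgModem N ℐ 𝒪 R n)
    (yerr : ∀ i j, Fin n → 𝒴 i j)
    (med : Medium N ℐ 𝒪) (i j : Fin N) : ℝ :=
  ∑ sc : ∀ i' j', ((Fin n → 𝒳 i' j') → Fin (nMsg (R i' j') n)) ×
      (Fin (nMsg (R i' j') n) → Fin n → 𝒴 i' j'),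
    (∏ i', ∏ j', (τ i' j').p (sc i' j')) *
    ∑ cc, σ.p cc *
      ∑ x : ∀ i' j', Fin n → 𝒳 i' j', (∏ i', ∏ j', ∏ t, pS i' j' (x i' j' t)) *
        ∑ o : ∀ i', Fin n → 𝒪 i',
          med.m n (fun i' => cc.1 i' (fun j' => (sc i' j').1 (x i' j'))) o *
          (if (n : ℝ) * D i j <
              ∑ t, dd i j (x i j t) (((cc.2 j (o j) i).elim (yerr i j) (sc i j).2) t)
           then 1 else 0)

/-! ### Finite distributions and marginals -/

lemma IsDist.pi {ι : Type} [Fintype ι] [DecidableEq ι] {α : ι → Type} [∀ i, Fintype (α i)]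
    {p : ∀ i, α i → ℝ} (hp : ∀ i, IsDist (p i)) :
    IsDist (fun x : ∀ i, α i => ∏ i, p i (x i)) := by
  refine ⟨fun x => Finset.prod_nonneg fun i _ => (hp i).1 _, ?_⟩
  rw [← Fintype.piFinset_univ, ← Finset.prod_univ_sum]
  exact Finset.prod_eq_one fun i _ => (hp i).2

/-- Averages of a bounded function over a distribution obey the same bound. -/
lemma IsDist.sum_mul_le {α : Type} [Fintype α] {p : α → ℝ} (hp : IsDist p) {g : α → ℝ} {c : ℝ}
    (hg : ∀ a, g a ≤ c) : ∑ a, p a * g a ≤ c := by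
  calc ∑ a, p a * g a ≤ ∑ a, p a * c :=
        Finset.sum_le_sum fun a _ => mul_le_mul_of_nonneg_left (hg a) (hp.1 a)
    _ = c := by rw [← Finset.sum_mul, hp.2, one_mul]

lemma IsDist.sum_mul_const {α : Type} [Fintype α] {p : α → ℝ} (hp : IsDist p) (c : ℝ) :
    ∑ a, p a * c = c := by
  rw [← Finset.sum_mul, hp.2, one_mul]

/-- Under a product distribution, the expectation of a function of one coordinate is its
expectation under the marginal of that coordinate. -/
lemma sum_prod_marginal {ι : Type} [Fintype ι] [DecidableEq ι] {α : ι → Type}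
    [∀ i, Fintype (α i)] {p : ∀ i, α i → ℝ} (hp : ∀ i, IsDist (p i)) (i₀ : ι) (g : α i₀ → ℝ) :
    ∑ x : ∀ i, α i, (∏ i, p i (x i)) * g (x i₀) = ∑ a, p i₀ a * g a := by
  -- The factor `g (x i₀)` is absorbed into the factor of the product at `i₀`.
  let q : ∀ i, α i → ℝ := Function.update p i₀ (fun a => p i₀ a * g a)
  have hq : ∀ i, i ≠ i₀ → q i = p i := fun i hi => Function.update_of_ne hi _ _
  have hq₀ : q i₀ = fun a => p i₀ a * g a := Function.update_self _ _ _
  have h1 : ∀ x : ∀ i, α i, (∏ i, p i (x i)) * g (x i₀) = ∏ i, q i (x i) := by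
    intro x
    rw [← Finset.mul_prod_erase _ _ (Finset.mem_univ i₀),
      ← Finset.mul_prod_erase _ (fun i => q i (x i)) (Finset.mem_univ i₀), hq₀,
      Finset.prod_congr rfl fun i hi => by rw [← hq i (Finset.ne_of_mem_erase hi)]]
    ring
  rw [Finset.sum_congr rfl fun x _ => h1 x, ← Fintype.piFinset_univ, ← Finset.prod_univ_sum,
    Finset.prod_eq_single i₀ (fun i _ hi => by rw [hq i hi, (hp i).2])
      (fun h => absurd (Finset.mem_univ _) h), hq₀]

lemma sum_prod_marginal₂ {N : ℕ} {α : Fin N → Fin N → Type} [∀ i j, Fintype (α i j)]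
    {p : ∀ i j, α i j → ℝ} (hp : ∀ i j, IsDist (p i j)) (i j : Fin N) (g : α i j → ℝ) :
    ∑ x : ∀ i' j', α i' j', (∏ i', ∏ j', p i' j' (x i' j')) * g (x i j)
      = ∑ a, p i j a * g a := by
  rw [sum_prod_marginal (α := fun i' => ∀ j', α i' j')
    (p := fun i' y => ∏ j', p i' j' (y j')) (fun i' => IsDist.pi (hp i')) i (fun y => g (y j)),
    sum_prod_marginal (hp i) j g]

lemma isDist_iidP {𝒳 : Type} [Fintype 𝒳] {pX : 𝒳 → ℝ} (h : IsDist pX) (n : ℕ) :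
    IsDist (iidP pX n) :=
  IsDist.pi (p := fun _ : Fin n => pX) fun _ => h

/-! ### Source codes of larger rate -/

lemma nMsg_mono {R' R : ℝ} (h : R' ≤ R) (n : ℕ) : nMsg R' n ≤ nMsg R n :=
  Nat.pow_le_pow_right (by norm_num)
    (Nat.floor_le_floor (mul_le_mul_of_nonneg_left h (Nat.cast_nonneg n)))

lemma nMsg_pos (R : ℝ) (n : ℕ) : 0 < nMsg R n := by
  unfold nMsg
  positivity

lemma RandCode.nonempty {A B C E : Type} [Fintype A] [DecidableEq A] [Fintype B]
    [Fintype C] [DecidableEq C] [Fintype E] (τ : RandCode A B C E) :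
    Nonempty ((A → B) × (C → E)) := by
  by_contra h
  rw [not_nonempty_iff] at h
  have := τ.isDist.2
  simp at this

open Classical in
/-- The image of a random code under a map of deterministic codes. -/
def RandCode.map {A B C E B' C' : Type} [Fintype A] [DecidableEq A] [Fintype B]
    [Fintype C] [DecidableEq C] [Fintype E] [Fintype B'] [Fintype C'] [DecidableEq C']
    (τ : RandCode A B C E) (φ : (A → B) × (C → E) → (A → B') × (C' → E)) :
    RandCode A B' C' E where
  p ef := ∑ ef', if φ ef' = ef then τ.p ef' else 0
  isDist := by
    refine ⟨fun ef => Finset.sum_nonneg fun ef' _ => ?_, ?_⟩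
    · split_ifs
      exacts [τ.isDist.1 _, le_rfl]
    · rw [Finset.sum_comm]
      simpa using τ.isDist.2

lemma RandCode.sum_map {A B C E B' C' : Type} [Fintype A] [DecidableEq A] [Fintype B]
    [Fintype C] [DecidableEq C] [Fintype E] [Fintype B'] [Fintype C'] [DecidableEq C']
    (τ : RandCode A B C E) (φ : (A → B) × (C → E) → (A → B') × (C' → E))
    (g : (A → B') × (C' → E) → ℝ) :
    ∑ ef, (τ.map φ).p ef * g ef = ∑ ef', τ.p ef' * g (φ ef') := by
  simp only [RandCode.map, Finset.sum_mul]
  rw [Finset.sum_comm]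
  simp [ite_mul]

/-- A source code can be run at a larger rate without changing its excess probability: the message
set is embedded into the larger one, and the decoder inverts the embedding. -/
lemma exists_srcCode_of_le {𝒳 𝒴 : Type} [Fintype 𝒳] [DecidableEq 𝒳] [Fintype 𝒴]
    (pX : 𝒳 → ℝ) (d : 𝒳 → 𝒴 → ℝ) (D : ℝ) {R' R : ℝ} (h : R' ≤ R) (n : ℕ)
    (τ : RandCode (Fin n → 𝒳) (Fin (nMsg R' n)) (Fin (nMsg R' n)) (Fin n → 𝒴)) :
    ∃ τ' : RandCode (Fin n → 𝒳) (Fin (nMsg R n)) (Fin (nMsg R n)) (Fin n → 𝒴),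
      srcExcess pX d D R n τ' = srcExcess pX d D R' n τ := by
  let emb : Fin (nMsg R' n) → Fin (nMsg R n) := Fin.castLE (nMsg_mono h n)
  have : Nonempty (Fin (nMsg R' n)) := ⟨⟨0, nMsg_pos R' n⟩⟩
  have hinv : ∀ m, Function.invFun emb (emb m) = m :=
    Function.leftInverse_invFun (Fin.castLE_injective _)
  refine ⟨τ.map fun ef => (fun x => emb (ef.1 x), fun m => ef.2 (Function.invFun emb m)), ?_⟩
  unfold srcExcess
  rw [RandCode.sum_map]
  simp only [hinv]

/-- Above the rate-distortion function there are source codes, at exactly the given rate, whose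
excess probability vanishes. -/
lemma exists_srcCode_of_RP_lt {𝒳 𝒴 : Type} [Fintype 𝒳] [DecidableEq 𝒳] [Fintype 𝒴]
    {pX : 𝒳 → ℝ} {d : 𝒳 → 𝒴 → ℝ} {D R : ℝ} (h : RP pX d D < ENNReal.ofReal R) :
    ∃ τ : ∀ n : ℕ, RandCode (Fin n → 𝒳) (Fin (nMsg R n)) (Fin (nMsg R n)) (Fin n → 𝒴),
      Tendsto (fun n => srcExcess pX d D R n (τ n)) atTop (nhds 0) := by
  obtain ⟨r, ⟨R', hR', ⟨τ, hτ⟩, rfl⟩, hlt⟩ := sInf_lt_iff.1 h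
  have hle : R' ≤ R := by
    by_contra hc
    exact absurd hlt (not_lt.2 (ENNReal.ofReal_le_ofReal (not_le.1 hc).le))
  choose τ' hτ' using fun n => exists_srcCode_of_le pX d D hle n (τ n)
  exact ⟨τ', by simpa only [hτ'] using hτ⟩

/-! ### The union bound -/

/-- The union bound for the separation architecture: an upper bound `δ` on the maximal error
probability of the message modems and the excess probability of the source code add up. -/
lemma muSepExcess_le (pS : ∀ i j, 𝒳 i j → ℝ) (hpS : ∀ i j, IsDist (pS i j))
    (dd : ∀ i j, 𝒳 i j → 𝒴 i j → ℝ) (D : Fin N → Fin N → ℝ) (R : Fin N → Fin N → ℝ) (n : ℕ)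
    (τ : ∀ i j, RandCode (Fin n → 𝒳 i j) (Fin (nMsg (R i j) n))
      (Fin (nMsg (R i j) n)) (Fin n → 𝒴 i j))
    (σ : RandMsgModem N ℐ 𝒪 R n) (yerr : ∀ i j, Fin n → 𝒴 i j)
    (med : Medium N ℐ 𝒪) (i j : Fin N) (δ : ℝ)
    (hδ : ∀ msg : ∀ i j, Fin (nMsg (R i j) n), muErr R n σ med msg i j ≤ δ) :
    muSepExcess pS dd D R n τ σ yerr med i j
      ≤ δ + srcExcess (pS i j) (dd i j) (D i j) (R i j) n (τ i j) := by
  have hsc := IsDist.pi fun i' => IsDist.pi fun j' => (τ i' j').isDist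
  have hx := IsDist.pi fun i' => IsDist.pi fun j' => isDist_iidP (hpS i' j') n
  have key : ∀ sc : ∀ i' j', ((Fin n → 𝒳 i' j') → Fin (nMsg (R i' j') n)) ×
      (Fin (nMsg (R i' j') n) → Fin n → 𝒴 i' j'),
      ∑ cc, σ.p cc *
        ∑ x : ∀ i' j', Fin n → 𝒳 i' j', (∏ i', ∏ j', ∏ t, pS i' j' (x i' j' t)) *
          ∑ o : ∀ i', Fin n → 𝒪 i',
            med.m n (fun i' => cc.1 i' (fun j' => (sc i' j').1 (x i' j'))) o *
            (if (n : ℝ) * D i j <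
                ∑ t, dd i j (x i j t) (((cc.2 j (o j) i).elim (yerr i j) (sc i j).2) t)
             then 1 else 0)
      ≤ δ + ∑ x, iidP (pS i j) n x *
        (if (n : ℝ) * D i j < dPow (dd i j) n x ((sc i j).2 ((sc i j).1 x)) then 1 else 0) := by
    intro sc
    -- `bad` marks the source blocks on which the source code alone exceeds the distortion level;
    -- when decoding is correct, it is the only source of excess distortion.
    let bad : (Fin n → 𝒳 i j) → ℝ := fun x =>
      if (n : ℝ) * D i j < dPow (dd i j) n x ((sc i j).2 ((sc i j).1 x)) then 1 else 0
    let msg : (∀ i' j', Fin n → 𝒳 i' j') → ∀ i' j', Fin (nMsg (R i' j') n) :=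
      fun x i' j' => (sc i' j').1 (x i' j')
    have inner : ∀ cc : ((∀ i, (∀ j, Fin (nMsg (R i j) n)) → Fin n → ℐ i) ×
          (∀ i, (Fin n → 𝒪 i) → ∀ j, Option (Fin (nMsg (R j i) n)))),
        ∀ x : ∀ i' j', Fin n → 𝒳 i' j',
        ∑ o : ∀ i', Fin n → 𝒪 i',
            med.m n (fun i' => cc.1 i' (fun j' => (sc i' j').1 (x i' j'))) o *
            (if (n : ℝ) * D i j <
                ∑ t, dd i j (x i j t) (((cc.2 j (o j) i).elim (yerr i j) (sc i j).2) t)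
             then (1 : ℝ) else 0)
        ≤ (∑ o, med.m n (fun i' => cc.1 i' (msg x i')) o *
            (if cc.2 j (o j) i = some (msg x i j) then 0 else 1)) + bad (x i j) := by
      intro cc x
      rw [← (med.isMed n (fun i' => cc.1 i' (msg x i'))).sum_mul_const (bad (x i j)),
        ← Finset.sum_add_distrib]
      refine Finset.sum_le_sum fun o _ => ?_
      rw [← mul_add]
      refine mul_le_mul_of_nonneg_left ?_ ((med.isMed n _).1 o)
      by_cases hc : cc.2 j (o j) i = some (msg x i j)
      · rw [hc, if_pos rfl, zero_add]
        exact le_rfl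
      · rw [if_neg hc]
        have hb : 0 ≤ bad (x i j) := by
          simp only [bad]
          split_ifs <;> norm_num
        split_ifs <;> linarith
    calc _ ≤ ∑ cc, σ.p cc * ∑ x : ∀ i' j', Fin n → 𝒳 i' j',
            (∏ i', ∏ j', iidP (pS i' j') n (x i' j')) *
            ((∑ o, med.m n (fun i' => cc.1 i' (msg x i')) o *
              (if cc.2 j (o j) i = some (msg x i j) then 0 else 1)) + bad (x i j)) :=
          Finset.sum_le_sum fun cc _ => mul_le_mul_of_nonneg_left
            (Finset.sum_le_sum fun x _ =>
              mul_le_mul_of_nonneg_left (inner cc x) (hx.1 x)) (σ.isDist.1 cc)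
      _ = (∑ x : ∀ i' j', Fin n → 𝒳 i' j',
            (∏ i', ∏ j', iidP (pS i' j') n (x i' j')) * muErr R n σ med (msg x) i j)
          + ∑ x, iidP (pS i j) n x * bad x := by
          simp only [mul_add, Finset.sum_add_distrib]
          congr 1
          · simp only [muErr, Finset.mul_sum]
            rw [Finset.sum_comm]
            refine Finset.sum_congr rfl fun x _ => Finset.sum_congr rfl fun cc _ =>
              Finset.sum_congr rfl fun o _ => by ring
          · rw [σ.isDist.sum_mul_const]
            exact sum_prod_marginal₂ (fun i' j' => isDist_iidP (hpS i' j') n) i j bad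
      _ ≤ δ + ∑ x, iidP (pS i j) n x * bad x := by
          gcongr
          exact hx.sum_mul_le fun x => hδ (msg x)
  calc muSepExcess pS dd D R n τ σ yerr med i j
      ≤ ∑ sc : ∀ i' j', ((Fin n → 𝒳 i' j') → Fin (nMsg (R i' j') n)) ×
          (Fin (nMsg (R i' j') n) → Fin n → 𝒴 i' j'), (∏ i', ∏ j', (τ i' j').p (sc i' j')) *
          (δ + ∑ x, iidP (pS i j) n x *
            (if (n : ℝ) * D i j < dPow (dd i j) n x ((sc i j).2 ((sc i j).1 x))
              then 1 else 0)) :=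
        Finset.sum_le_sum fun sc _ => mul_le_mul_of_nonneg_left (key sc) (hsc.1 sc)
    _ = δ + srcExcess (pS i j) (dd i j) (D i j) (R i j) n (τ i j) := by
        rw [sum_prod_marginal₂ (fun i' j' => (τ i' j').isDist) i j (fun ef =>
          δ + ∑ x, iidP (pS i j) n x *
            (if (n : ℝ) * D i j < dPow (dd i j) n x (ef.2 (ef.1 x)) then 1 else 0))]
        simp only [mul_add, Finset.sum_add_distrib]
        rw [(τ i j).isDist.sum_mul_const]
        rfl

/-- Random codes permitted. If rates `R i j > R^P_{X_{ij}}(D_{ij})` are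
simultaneously reliably achievable over every `m ∈ ℬ` with random codes, then the mutually
independent i.i.d. sources `X_{ij}` can be communicated from user `i` to user `j` to within
distortions `D i j` over `ℬ` by a separation architecture, composing per-pair source
encoders/decoders with the medium modems achieving the reliable rates. -/
theorem stmt3 (pS : ∀ i j, 𝒳 i j → ℝ) (hpS : ∀ i j, IsDist (pS i j))
    (dd : ∀ i j, 𝒳 i j → 𝒴 i j → ℝ) (hdd : ∀ i j x y, 0 ≤ dd i j x y)
    (D : Fin N → Fin N → ℝ) (hD : ∀ i j, 0 ≤ D i j)
    (ℬ : Set (Medium N ℐ 𝒪))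
    (R : Fin N → Fin N → ℝ) (hR0 : ∀ i j, 0 < R i j)
    (hR : ∀ i j, RP (pS i j) (dd i j) (D i j) < ENNReal.ofReal (R i j))
    (hach : MUReliablyAchievable ℬ R) :
    ∃ (τ : ∀ n : ℕ, ∀ i j, RandCode (Fin n → 𝒳 i j) (Fin (nMsg (R i j) n))
        (Fin (nMsg (R i j) n)) (Fin n → 𝒴 i j))
      (σ : ∀ n : ℕ, RandMsgModem N ℐ 𝒪 R n)
      (yerr : ∀ n : ℕ, ∀ i j, Fin n → 𝒴 i j)
      (ω : Fin N → Fin N → ℕ → ℝ),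
      (∀ i j, Tendsto (ω i j) atTop (nhds 0)) ∧
      ∀ n : ℕ, ∀ med ∈ ℬ, ∀ i j,
        muSepExcess pS dd D R n (τ n) (σ n) (yerr n) med i j ≤ ω i j n := by
  obtain ⟨σ, δ, hδ, herr⟩ := hach
  choose τ hτ using fun i j => exists_srcCode_of_RP_lt (hR i j)
  -- Any deterministic decoder supplies a reproduction block to emit on errors.
  let yerr : ∀ n : ℕ, ∀ i j, Fin n → 𝒴 i j := fun n i j =>
    (Classical.choice (τ i j n).nonempty).2 ⟨0, nMsg_pos _ _⟩
  refine ⟨fun n i j => τ i j n, σ, yerr, fun i j n =>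
    δ n + srcExcess (pS i j) (dd i j) (D i j) (R i j) n (τ i j n), fun i j => ?_, ?_⟩
  · simpa using hδ.add (hτ i j)
  · intro n med hmed i j
    exact muSepExcess_le pS hpS dd D R n _ (σ n) (yerr n) med i j (δ n)
      fun msg => herr n med hmed msg i j

end
end
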